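/- arXiv:2409.07142 — 2 statements merged into one kernel-verified Lean document; each statement's English description precedes it below -/
import Mathlib

section
/- Fix n ≥ 1 and δ ∈ [0, 1/2]. Consider the randomized learning-augmented mechanism f for n agents on the line that, given reports x ∈ ℝⁿ (with x_L = minᵢ xᵢ, x_R = maxᵢ xᵢ, M = (x_L+x_R)/2) and a prediction F* ∈ ℝ of the optimal facility location, outputs: with probability δ/2 the point x_L, with probability δ/2 the point x_R, with probability δ the point M, and with probability 1−2δ the point F* clamped to the interval [x_L, x_R] (i.e., x_L if F* < x_L, x_R if F* > x_R, and F* otherwise). Then f is truthful in expectation, (1+δ)-consistent, and (2−δ)-robust. -/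
open MeasureTheory

/-- The randomized learning-augmented mechanism for `n` agents on the line: given
reports `x` (with `x_L = min_i x_i`, `x_R = max_i x_i`, `M = (x_L+x_R)/2`) and a
prediction `F` of the optimal facility location, it outputs `x_L` with probability
`δ/2`, `x_R` with probability `δ/2`, `M` with probability `δ`, and `F` clamped to
`[x_L, x_R]` with probability `1 - 2δ`. -/
noncomputable def lineMech (n : ℕ) (δ : ℝ) (x : Fin n → ℝ) (F : ℝ) : Measure ℝ :=
  let xL := ⨅ i, x i
  let xR := ⨆ i, x i
  let M := (xL + xR) / 2
  ENNReal.ofReal (δ / 2) • Measure.dirac xL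
    + ENNReal.ofReal (δ / 2) • Measure.dirac xR
    + ENNReal.ofReal δ • Measure.dirac M
    + ENNReal.ofReal (1 - 2 * δ) • Measure.dirac (max xL (min xR F))

theorem lineMech_integral (n : ℕ) (δ : ℝ) (h0 : 0 ≤ δ) (h1 : δ ≤ 1 / 2) (x : Fin n → ℝ) (F : ℝ)
    (f : ℝ → ℝ) :
    ∫ y, f y ∂(lineMech n δ x F) = δ / 2 * f (⨅ i, x i) + δ / 2 * f (⨆ i, x i)
      + δ * f (((⨅ i, x i) + ⨆ i, x i) / 2)
      + (1 - 2 * δ) * f (max (⨅ i, x i) (min (⨆ i, x i) F)) := by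
  have hi : ∀ (c a : ℝ), Integrable f (ENNReal.ofReal c • Measure.dirac a) := fun c a =>
    (integrable_dirac (by simp)).smul_measure ENNReal.ofReal_ne_top
  unfold lineMech
  simp only
  rw [integral_add_measure (((hi _ _).add_measure (hi _ _)).add_measure (hi _ _)) (hi _ _),
    integral_add_measure ((hi _ _).add_measure (hi _ _)) (hi _ _),
    integral_add_measure (hi _ _) (hi _ _)]
  simp only [integral_smul_measure, integral_dirac, smul_eq_mul]
  rw [ENNReal.toReal_ofReal (by linarith), ENNReal.toReal_ofReal h0,
    ENNReal.toReal_ofReal (by linarith)]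

theorem clamp_mono (L R L' R' a F : ℝ) (h1 : L ≤ a) (h2 : a ≤ R) (h3 : L' ≤ R')
    (hL : a = L ∨ L' ≤ L) (hR : a = R ∨ R ≤ R') :
    |max L (min R F) - a| ≤ |max L' (min R' F) - a| := by
  rcases le_total R F with h | h <;> rcases le_total R' F with h' | h' <;>
  simp only [h, h', min_eq_left, min_eq_right] <;>
  grind

theorem ends_mono (L R L' R' a : ℝ) (h1 : L ≤ a) (h2 : a ≤ R) (h3 : L' ≤ R')
    (hL : a = L ∨ L' ≤ L) (hR : a = R ∨ R ≤ R') :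
    |L - a| + |R - a| + 2 * |(L + R) / 2 - a| ≤
      |L' - a| + |R' - a| + 2 * |(L' + R') / 2 - a| := by
  grind

theorem cost_le (n : ℕ) (hn : 1 ≤ n) (x : Fin n → ℝ) (y c : ℝ)
    (h1 : y - (⨅ i, x i) ≤ c) (h2 : (⨆ i, x i) - y ≤ c) : (⨆ i, |y - x i|) ≤ c := by
  haveI : Nonempty (Fin n) := ⟨⟨0, hn⟩⟩
  apply ciSup_le
  intro i
  have := ciInf_le (Set.finite_range x).bddBelow i
  have := le_ciSup (Set.finite_range x).bddAbove i
  rw [abs_le]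
  constructor <;> linarith

/-- for every `n ≥ 1` and `δ ∈ [0, 1/2]`, the mechanism `lineMech n δ` is
truthful in expectation, `(1+δ)`-consistent, and `(2-δ)`-robust for the egalitarian
social cost. -/
theorem stmt5 (n : ℕ) (hn : 1 ≤ n) (δ : ℝ) (hδ : δ ∈ Set.Icc (0 : ℝ) (1 / 2)) :
    -- truthful in expectation (for every fixed prediction)
    (∀ (F : ℝ) (x : Fin n → ℝ) (i : Fin n) (x' : ℝ),
      ∫ y, |y - x i| ∂(lineMech n δ x F)
        ≤ ∫ y, |y - x i| ∂(lineMech n δ (Function.update x i x') F)) ∧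
    -- (1+δ)-consistency: the prediction equals the optimal facility location
    (∀ x : Fin n → ℝ,
      ∫ y, (⨆ i, |y - x i|) ∂(lineMech n δ x (((⨅ i, x i) + ⨆ i, x i) / 2))
        ≤ (1 + δ) * (((⨆ i, x i) - ⨅ i, x i) / 2)) ∧
    -- (2-δ)-robustness: for every prediction
    (∀ (x : Fin n → ℝ) (F : ℝ),
      ∫ y, (⨆ i, |y - x i|) ∂(lineMech n δ x F)
        ≤ (2 - δ) * (((⨆ i, x i) - ⨅ i, x i) / 2)) := by
  obtain ⟨h0, h1⟩ := hδ
  haveI : Nonempty (Fin n) := ⟨⟨0, hn⟩⟩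
  have lo : ∀ (x : Fin n → ℝ) i, (⨅ i, x i) ≤ x i := fun x i =>
    ciInf_le (Set.finite_range x).bddBelow i
  have hi : ∀ (x : Fin n → ℝ) i, x i ≤ ⨆ i, x i := fun x i =>
    le_ciSup (Set.finite_range x).bddAbove i
  have lr : ∀ (x : Fin n → ℝ), (⨅ i, x i) ≤ ⨆ i, x i := fun x =>
    (lo x ⟨0, hn⟩).trans (hi x ⟨0, hn⟩)
  refine ⟨?_, ?_, ?_⟩
  · intro F x i x'
    rw [lineMech_integral n δ h0 h1, lineMech_integral n δ h0 h1]
    have hL : x i = (⨅ i, x i) ∨ (⨅ j, Function.update x i x' j) ≤ ⨅ i, x i := by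
      obtain ⟨j, hj⟩ := exists_eq_ciInf_of_finite (f := x)
      by_cases hji : j = i
      · left; rw [← hj, hji]
      · right
        have := lo (Function.update x i x') j
        rwa [Function.update_of_ne hji, hj] at this
    have hR : x i = (⨆ i, x i) ∨ (⨆ i, x i) ≤ (⨆ j, Function.update x i x' j) := by
      obtain ⟨j, hj⟩ := exists_eq_ciSup_of_finite (f := x)
      by_cases hji : j = i
      · left; rw [← hj, hji]
      · right
        have := hi (Function.update x i x') j
        rwa [Function.update_of_ne hji, hj] at this
    have A := clamp_mono _ _ _ _ _ F (lo x i) (hi x i) (lr _) hL hR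
    have B := ends_mono _ _ _ _ _ (lo x i) (hi x i) (lr _) hL hR
    have A' := mul_le_mul_of_nonneg_left A (by linarith : 0 ≤ 1 - 2 * δ)
    have B' := mul_le_mul_of_nonneg_left B (by linarith : 0 ≤ δ / 2)
    linarith
  · intro x
    rw [lineMech_integral n δ h0 h1]
    have h := lr x
    rw [min_eq_right (by linarith), max_eq_right (by linarith)]
    have A := mul_le_mul_of_nonneg_left (cost_le n hn x (⨅ i, x i) ((⨆ i, x i) - ⨅ i, x i)
      (by linarith) (by linarith)) (by linarith : 0 ≤ δ / 2)
    have B := mul_le_mul_of_nonneg_left (cost_le n hn x (⨆ i, x i) ((⨆ i, x i) - ⨅ i, x i)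
      (by linarith) (by linarith)) (by linarith : 0 ≤ δ / 2)
    have C := mul_le_mul_of_nonneg_left (cost_le n hn x (((⨅ i, x i) + ⨆ i, x i) / 2)
      (((⨆ i, x i) - ⨅ i, x i) / 2) (by linarith) (by linarith)) (by linarith : 0 ≤ 1 - δ)
    linarith
  · intro x F
    rw [lineMech_integral n δ h0 h1]
    have h := lr x
    have A := mul_le_mul_of_nonneg_left (cost_le n hn x (⨅ i, x i) ((⨆ i, x i) - ⨅ i, x i)
      (by linarith) (by linarith)) (by linarith : 0 ≤ δ / 2)
    have B := mul_le_mul_of_nonneg_left (cost_le n hn x (⨆ i, x i) ((⨆ i, x i) - ⨅ i, x i)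
      (by linarith) (by linarith)) (by linarith : 0 ≤ δ / 2)
    have C := mul_le_mul_of_nonneg_left (cost_le n hn x (((⨅ i, x i) + ⨆ i, x i) / 2)
      (((⨆ i, x i) - ⨅ i, x i) / 2) (by linarith) (by linarith)) h0
    have hc1 : (⨅ i, x i) ≤ max (⨅ i, x i) (min (⨆ i, x i) F) := le_max_left _ _
    have hc2 : max (⨅ i, x i) (min (⨆ i, x i) F) ≤ ⨆ i, x i := max_le h (min_le_left _ _)
    have D := mul_le_mul_of_nonneg_left (cost_le n hn x (max (⨅ i, x i) (min (⨆ i, x i) F))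
      ((⨆ i, x i) - ⨅ i, x i) (by linarith) (by linarith)) (by linarith : 0 ≤ 1 - 2 * δ)
    linarith
end

section
/- Let f be a deterministic learning-augmented mechanism for five agents in the Euclidean plane that receives a profile x ∈ (ℝ²)⁵ together with a prediction x̂ ∈ (ℝ²)⁵ of all five agents' locations, and such that for every fixed prediction x̂, the map x ↦ f(x, x̂) is truthful, anonymous (invariant under permutations of the five reports), and unanimous (if all five reports coincide at a point z, the output is z). Then for every δ > 0, f is not both (2−δ)-consistent and (1+√2−δ)-robust: either there exists a profile x with opt(x) > 0 such that the egalitarian social cost of f(x,x) on x is at least 2·opt(x), or there exist a profile x with opt(x) > 0 and a prediction x̂ such that the egalitarian social cost of f(x,x̂) on x is at least (1+√2)·opt(x). -/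
abbrev E2 := EuclideanSpace ℝ (Fin 2)

noncomputable def dt (v w : E2) : ℝ := v 0 * w 0 + v 1 * w 1

noncomputable def JJ (v : E2) : E2 := !₂[-(v 1), v 0]

lemma JJ0 (v : E2) : JJ v 0 = -(v 1) := by simp [JJ]
lemma JJ1 (v : E2) : JJ v 1 = v 0 := by simp [JJ]

lemma dt_comm (v w : E2) : dt v w = dt w v := by simp only [dt]; ring
lemma dt_sub_left (a b c : E2) : dt (a - b) c = dt a c - dt b c := by
  simp only [dt, PiLp.sub_apply]; ring
lemma dt_sub_right (a b c : E2) : dt c (a - b) = dt c a - dt c b := by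
  simp only [dt, PiLp.sub_apply]; ring
lemma dt_add_left (a b c : E2) : dt (a + b) c = dt a c + dt b c := by
  simp only [dt, PiLp.add_apply]; ring
lemma dt_add_right (a b c : E2) : dt c (a + b) = dt c a + dt c b := by
  simp only [dt, PiLp.add_apply]; ring
lemma dt_smul_left (t : ℝ) (b c : E2) : dt (t • b) c = t * dt b c := by
  simp only [dt, PiLp.smul_apply, smul_eq_mul]; ring
lemma dt_smul_right (t : ℝ) (b c : E2) : dt c (t • b) = t * dt c b := by
  simp only [dt, PiLp.smul_apply, smul_eq_mul]; ring
lemma dt_neg_left (b c : E2) : dt (-b) c = - dt b c := by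
  simp only [dt, PiLp.neg_apply]; ring
lemma dt_neg_right (b c : E2) : dt c (-b) = - dt c b := by
  simp only [dt, PiLp.neg_apply]; ring
lemma dt_zero_left (c : E2) : dt 0 c = 0 := by simp [dt]
lemma dt_zero_right (c : E2) : dt c 0 = 0 := by simp [dt]
lemma dt_nonneg (v : E2) : 0 ≤ dt v v := by simp only [dt]; nlinarith [sq_nonneg (v 0), sq_nonneg (v 1)]
lemma dt_zero {v : E2} (h : dt v v ≤ 0) : v = 0 := by
  simp only [dt] at h
  have h0 : v 0 = 0 := by nlinarith [sq_nonneg (v 0), sq_nonneg (v 1)]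
  have h1 : v 1 = 0 := by nlinarith [sq_nonneg (v 0), sq_nonneg (v 1)]
  ext i; fin_cases i
  · simpa using h0
  · simpa using h1
lemma dt_pos {v : E2} (h : v ≠ 0) : 0 < dt v v := by
  by_contra hc
  exact h (dt_zero (not_lt.mp hc))
lemma eq_of_dt {v w : E2} (h : dt (v - w) (v - w) ≤ 0) : v = w := sub_eq_zero.mp (dt_zero h)
lemma dist_dt (a b : E2) : dist a b ^ 2 = dt (a - b) (a - b) := by
  rw [EuclideanSpace.dist_eq, Real.sq_sqrt (by positivity)]
  simp [dt, Fin.sum_univ_two, Real.dist_eq, sq_abs]; ring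
lemma norm_dt (a : E2) : ‖a‖ ^ 2 = dt a a := by
  have := dist_dt a 0; simpa using this
lemma dist_le_dt {a b c d : E2} : dist a b ≤ dist c d ↔ dt (a - b) (a - b) ≤ dt (c - d) (c - d) := by
  rw [← dist_dt, ← dist_dt]
  exact (sq_le_sq₀ dist_nonneg dist_nonneg).symm
lemma dt_CS (a b : E2) : dt a b ≤ ‖a‖ * ‖b‖ := by
  have h1 := norm_dt a; have h2 := norm_dt b
  have : dt a b ^ 2 ≤ (‖a‖ * ‖b‖) ^ 2 := by
    rw [mul_pow, h1, h2]; simp only [dt]; nlinarith [sq_nonneg (a 0 * b 1 - a 1 * b 0)]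
  exact le_of_sq_le_sq this (by positivity) 
lemma dt_frame (e z w : E2) : dt e e * dt z w = dt z e * dt w e + dt z (JJ e) * dt w (JJ e) := by
  simp only [dt, JJ0, JJ1]; ring
lemma dt_JJ (e : E2) : dt (JJ e) (JJ e) = dt e e := by simp only [dt, JJ0, JJ1]; ring
lemma dt_e_JJ (e : E2) : dt e (JJ e) = 0 := by simp only [dt, JJ0, JJ1]; ring
lemma dt_JJ_e (e : E2) : dt (JJ e) e = 0 := by simp only [dt, JJ0, JJ1]; ring
lemma JJ_neg (e : E2) : JJ (-e) = - JJ e := by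
  ext i; fin_cases i
  · simp [JJ]
  · simp [JJ]

lemma small_le {c M : ℝ} (h : ∀ t : ℝ, 0 < t → t ≤ 1 → c ≤ t * M) : c ≤ 0 := by
  by_contra hc
  push Not at hc
  have hM : c ≤ M := by simpa using h 1 one_pos le_rfl
  have hMp : 0 < M := lt_of_lt_of_le hc hM
  have := h (c / (2 * M)) (by positivity) (by rw [div_le_one (by positivity)]; linarith)
  have e : c / (2 * M) * M = c / 2 := by field_simp
  linarith

structure TS (h : E2 → E2 → E2) : Prop where
  s1 : ∀ X X' Y, dt (h X Y - X) (h X Y - X) ≤ dt (h X' Y - X) (h X' Y - X)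
  s2 : ∀ X Y Y', dt (h X Y - Y) (h X Y - Y) ≤ dt (h X Y' - Y) (h X Y' - Y)
  un : ∀ X, h X X = X

lemma TS.flip {h : E2 → E2 → E2} (H : TS h) : TS (fun X Y => h Y X) :=
  ⟨fun X X' Y => H.s2 Y X X', fun X Y Y' => H.s1 Y Y' X, H.un⟩

lemma TS.to1 {h : E2 → E2 → E2} (H : TS h) {X Y u : E2} (hu : h X Y = u) : h u Y = u := by
  have := H.s1 u X Y
  rw [hu, sub_self, dt_zero_left] at this
  exact eq_of_dt this

lemma TS.to2 {h : E2 → E2 → E2} (H : TS h) {X Y u : E2} (hu : h X Y = u) : h X u = u :=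
  H.flip.to1 hu

lemma TS.seg1 {h : E2 → E2 → E2} (H : TS h) {X Y u : E2} (hu : h X Y = u) {t : ℝ} (h0 : 0 ≤ t)
    (h1 : t ≤ 1) : h (u + t • (X - u)) Y = u := by
  rcases h1.lt_or_eq with h1 | rfl
  swap
  · simpa using hu
  have a := H.s1 (u + t • (X - u)) X Y
  have b := H.s1 X (u + t • (X - u)) Y
  rw [hu] at a b
  set y := h (u + t • (X - u)) Y
  apply eq_of_dt
  have e1 : y - (u + t • (X - u)) = (y - u) - t • (X - u) := by abel
  have e2 : u - (u + t • (X - u)) = - (t • (X - u)) := by abel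
  have e3 : y - X = (y - u) - (X - u) := by abel
  have e4 : u - X = - (X - u) := by abel
  rw [e1, e2] at a
  rw [e3, e4] at b
  generalize y - u = p at *
  generalize X - u = d at *
  have hp := dt_nonneg p
  simp only [dt_sub_left, dt_sub_right, dt_smul_left, dt_smul_right, dt_neg_left, dt_neg_right] at a b
  rw [dt_comm d p] at a b
  nlinarith

lemma TS.disc {h : E2 → E2 → E2} (H : TS h) {X Y u : E2} (hu : h X Y = u) :
    dt (X - u) (Y - u) ≤ 0 := by
  apply small_le (M := dt (X - u) (X - u) / 2)
  intro t ht ht1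
  have a := H.seg1 hu ht.le ht1
  have b := H.s2 (u + t • (X - u)) Y (u + t • (X - u))
  rw [a, H.un] at b
  have e1 : u - Y = - (Y - u) := by abel
  have e2 : u + t • (X - u) - Y = t • (X - u) - (Y - u) := by abel
  rw [e1, e2] at b
  generalize Y - u = p at *
  generalize X - u = d at *
  simp only [dt_sub_left, dt_sub_right, dt_smul_left, dt_smul_right, dt_neg_left, dt_neg_right] at b
  rw [dt_comm p d] at b
  have : t * (2 * dt d p) ≤ t * (t * dt d d) := by linarith
  have := le_of_mul_le_mul_left this ht
  linarith

/-- generic: if doubling-type extension works, then half-plane -/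
lemma pow_half {c M : ℝ} (h : ∀ n : ℕ, 2 * (3/2 : ℝ) ^ n * c ≤ M) : c ≤ 0 := by
  by_contra hc
  push Not at hc
  obtain ⟨n, hn⟩ := pow_unbounded_of_one_lt (M / c) (by norm_num : (1:ℝ) < 3/2)
  have := h n
  rw [div_lt_iff₀ hc] at hn
  have : 0 < (3/2 : ℝ)^n * c := by positivity
  linarith

lemma TS.ext1 {h : E2 → E2 → E2} (H : TS h) {X u : E2} (hu : h X u = u) :
    h (u + (3/2 : ℝ) • (X - u)) u = u := by
  set y := h (u + (3/2 : ℝ) • (X - u)) u with hy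
  have a := H.disc hy.symm
  have b := H.s1 X (u + (3/2 : ℝ) • (X - u)) u
  rw [hu, ← hy] at b
  apply eq_of_dt
  have e1 : u + (3/2 : ℝ) • (X - u) - y = (3/2 : ℝ) • (X - u) - (y - u) := by abel
  have e2 : u - y = - (y - u) := by abel
  have e3 : y - X = (y - u) - (X - u) := by abel
  have e4 : u - X = - (X - u) := by abel
  rw [e1, e2] at a
  rw [e3, e4] at b
  have hp := dt_nonneg (y - u)
  generalize y - u = p at *
  generalize X - u = d at *
  simp only [dt_sub_left, dt_sub_right, dt_smul_left, dt_smul_right, dt_neg_left, dt_neg_right] at a b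
  rw [dt_comm d p] at a b
  linarith

lemma TS.extN {h : E2 → E2 → E2} (H : TS h) {X u Y : E2} (hu : h X Y = u)
    (step : ∀ X, h X Y = u → h (u + (3/2 : ℝ) • (X - u)) Y = u) (n : ℕ) :
    h (u + ((3/2 : ℝ)^n) • (X - u)) Y = u := by
  induction n with
  | zero => simpa using hu
  | succ n ih =>
    have := step _ ih
    rw [add_sub_cancel_left, smul_smul] at this
    rw [pow_succ, mul_comm]; exact this

lemma TS.half {h : E2 → E2 → E2} (H : TS h) {X u Y : E2} (hu : h X Y = u)
    (step : ∀ X, h X Y = u → h (u + (3/2 : ℝ) • (X - u)) Y = u) (X' : E2) :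
    dt (X - u) (h X' Y - u) ≤ 0 := by
  apply pow_half (M := dt (h X' Y - u) (h X' Y - u))
  intro n
  have a := H.extN hu step n
  have b := H.s1 (u + ((3/2 : ℝ)^n) • (X - u)) X' Y
  rw [a] at b
  generalize (3/2 : ℝ)^n = T at *
  have e1 : u - (u + T • (X - u)) = - (T • (X - u)) := by abel
  have e2 : h X' Y - (u + T • (X - u)) = (h X' Y - u) - T • (X - u) := by abel
  rw [e1, e2] at b
  generalize h X' Y - u = p at *
  generalize X - u = d at *
  simp only [dt_sub_left, dt_sub_right, dt_smul_left, dt_smul_right, dt_neg_left, dt_neg_right] at b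
  rw [dt_comm p d] at b
  linarith

lemma TS.kvi {h : E2 → E2 → E2} (H : TS h) {X u : E2} (hu : h X u = u) (X' : E2) :
    dt (X - u) (h X' u - u) ≤ 0 :=
  H.half hu (fun _ hX => H.ext1 hX) X'

lemma key_real {z1 z2 v1 v2 Y1 Y2 : ℝ} (hz : 0 < z2) (hv : v2 ≤ 0)
    (hd : v1^2 + v2^2 ≤ v1*z1 + v2*z2) (hY : Y2 ≤ 0)
    (hh : (v1-z1)*(Y1-z1) + (v2-z2)*(Y2-z2) ≤ 0) : z1^2+z2^2 ≤ Y1*z1+Y2*z2 := by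
  have a1 : v1^2 ≤ v1 * z1 := by nlinarith
  have a2 : 0 < (z2 - v2) * (z2 - Y2) := by apply mul_pos <;> linarith
  have a3 : z2 * (z2 - Y2) ≤ (z2 - v2) * (z2 - Y2) := by
    apply mul_le_mul_of_nonneg_right <;> linarith
  have a4 : (z2 - v2) * (z2 - Y2) ≤ (z1 - v1) * (Y1 - z1) := by linarith
  rcases lt_trichotomy z1 0 with h | h | h
  · have b1 : v1 ≤ 0 := by nlinarith
    have b2 : z1 ≤ v1 := by nlinarith
    have b3 : Y1 - z1 < 0 := by nlinarith
    nlinarith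
  · subst h
    have b1 : v1 = 0 := by nlinarith
    subst b1
    nlinarith
  · have b1 : 0 ≤ v1 := by nlinarith
    have b2 : v1 ≤ z1 := by nlinarith
    have b3 : 0 < Y1 - z1 := by nlinarith
    nlinarith

lemma TS.key {h : E2 → E2 → E2} (H : TS h) {X X' Y y z : E2} (hy : h X Y = y) (hz : h X' Y = z)
    (hpos : 0 < dt (z - y) (X - y)) : dt (z - y) (z - y) ≤ dt (Y - y) (z - y) := by
  set v := h z y with hv
  have c1 := H.kvi (H.to2 hy) z
  have c2 := H.flip.kvi (H.to1 hz) y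
  have c3 := H.disc hv.symm
  have c4 := H.disc hy
  rw [← hv] at c1 c2
  have e0 : X - y ≠ 0 := by
    intro h0; rw [h0, dt_zero_right] at hpos; exact lt_irrefl _ hpos
  have ep := dt_pos e0
  have r1 : Y - z = (Y - y) - (z - y) := by abel
  have r2 : v - z = (v - y) - (z - y) := by abel
  have r3 : z - v = (z - y) - (v - y) := by abel
  have r4 : y - v = - (v - y) := by abel
  rw [r1, r2] at c2
  rw [r3, r4] at c3
  generalize z - y = a at *
  generalize v - y = b at *
  generalize Y - y = c at *
  generalize X - y = e at *
  rw [dt_comm] at c1 c4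
  have d1 : dt e e * dt (c - a) (b - a) ≤ 0 := mul_nonpos_of_nonneg_of_nonpos ep.le c2
  have d2 : dt e e * dt (a - b) (-b) ≤ 0 := mul_nonpos_of_nonneg_of_nonpos ep.le c3
  rw [dt_frame] at d1 d2
  simp only [dt_sub_left, dt_neg_left] at d1 d2
  have K := key_real (z1 := dt a (JJ e)) (z2 := dt a e) (v1 := dt b (JJ e)) (v2 := dt b e)
    (Y1 := dt c (JJ e)) (Y2 := dt c e) hpos c1 (by nlinarith) c4 (by nlinarith)
  have f1 := dt_frame e a a
  have f2 := dt_frame e c a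
  have : dt e e * dt a a ≤ dt e e * dt c a := by rw [f1, f2]; nlinarith
  exact le_of_mul_le_mul_left this ep

lemma TS.ext {h : E2 → E2 → E2} (H : TS h) {X Y u : E2} (hu : h X Y = u) :
    h (u + (3/2 : ℝ) • (X - u)) Y = u := by
  set y := h (u + (3/2 : ℝ) • (X - u)) Y with hy
  by_contra hne
  have hp : 0 < dt (y - u) (y - u) := dt_pos (sub_ne_zero.mpr hne)
  have a := H.s1 (u + (3/2 : ℝ) • (X - u)) X Y
  have b := H.s1 X (u + (3/2 : ℝ) • (X - u)) Y
  rw [hu, ← hy] at a b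
  have k1 := H.key (z := y) (X' := u + (3/2 : ℝ) • (X - u)) hu hy.symm
  have k2 := H.key (X := u + (3/2 : ℝ) • (X - u)) (X' := X) (z := u) hy.symm hu
  have e1 : u + (3/2 : ℝ) • (X - u) - y = (3/2 : ℝ) • (X - u) - (y - u) := by abel
  have e2 : u - y = - (y - u) := by abel
  have e3 : y - X = (y - u) - (X - u) := by abel
  have e4 : u - X = - (X - u) := by abel
  have e5 : y - (u + (3/2 : ℝ) • (X - u)) = (y - u) - (3/2 : ℝ) • (X - u) := by abel
  have e6 : u - (u + (3/2 : ℝ) • (X - u)) = - ((3/2 : ℝ) • (X - u)) := by abel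
  have e7 : Y - y = (Y - u) - (y - u) := by abel
  rw [e5, e6] at a
  rw [e3, e4] at b
  rw [e1, e2, e7] at k2
  generalize y - u = p at *
  generalize X - u = d at *
  generalize Y - u = w at *
  simp only [dt_sub_left, dt_sub_right, dt_smul_left, dt_smul_right, dt_neg_left, dt_neg_right] at a b k1 k2
  rw [dt_comm d p] at a b
  have := k1 (by linarith)
  have := k2 (by linarith)
  linarith

lemma TS.vi1 {h : E2 → E2 → E2} (H : TS h) (X X' Y : E2) :
    dt (X - h X Y) (h X' Y - h X Y) ≤ 0 :=
  H.half rfl (fun _ hX => H.ext hX) X'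

lemma TS.vi2 {h : E2 → E2 → E2} (H : TS h) (X Y Y' : E2) :
    dt (Y - h X Y) (h X Y' - h X Y) ≤ 0 :=
  H.flip.vi1 Y Y' X

lemma TS.conv1 {h : E2 → E2 → E2} (H : TS h) {Y z k : E2} (hz : h z Y = z)
    (hk : ∀ X', dt k (h X' Y - z) ≤ 0) : h (z + k) Y = z := by
  set u := h (z + k) Y with hu
  have a := H.vi1 (z + k) z Y
  have b := hk (z + k)
  rw [← hu, hz] at a
  rw [← hu] at b
  apply eq_of_dt
  have e1 : z + k - u = k - (u - z) := by abel
  have e2 : z - u = -(u - z) := by abel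
  rw [e1, e2] at a
  generalize u - z = p at *
  simp only [dt_sub_left, dt_neg_right] at a
  linarith

lemma TS.nonexp1 {h : E2 → E2 → E2} (H : TS h) (X X' Y : E2) :
    dist (h X Y) (h X' Y) ≤ dist X X' := by
  have a := H.vi1 X X' Y
  have b := H.vi1 X' X Y
  set u := h X Y
  set u' := h X' Y
  have c := dt_CS (X - X') (u - u')
  rw [← dist_eq_norm, ← dist_eq_norm] at c
  have d := dist_dt u u'
  have e : dt (u - u') (u - u') ≤ dt (X - X') (u - u') := by
    simp only [dt_sub_left, dt_sub_right] at *
    linarith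
  by_contra hc
  push Not at hc
  have : 0 ≤ dist X X' := dist_nonneg
  nlinarith

lemma TS.cont {h : E2 → E2 → E2} (H : TS h) : Continuous (fun p : E2 × E2 => h p.1 p.2) := by
  apply LipschitzWith.continuous (K := 2)
  apply LipschitzWith.of_dist_le_mul
  rintro ⟨X, Y⟩ ⟨X', Y'⟩
  have a := H.nonexp1 X X' Y
  have b := H.flip.nonexp1 Y Y' X'
  have c := dist_triangle (h X Y) (h X' Y) (h X' Y')
  have d1 : dist X X' ≤ dist (X, Y) (X', Y') := by rw [Prod.dist_eq]; exact le_max_left _ _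
  have d2 : dist Y Y' ≤ dist (X, Y) (X', Y') := by rw [Prod.dist_eq]; exact le_max_right _ _
  push_cast
  linarith


def KK (h : E2 → E2 → E2) (v k : E2) : Prop := h (v + k) v = v

lemma TS.KK_iff {h : E2 → E2 → E2} (H : TS h) (v k : E2) :
    KK h v k ↔ ∀ X', dt k (h X' v - v) ≤ 0 := by
  constructor
  · intro hk X'
    have := H.kvi hk X'
    rwa [add_sub_cancel_left] at this
  · intro hk
    exact H.conv1 (H.un v) hk

lemma TS.KK_smul {h : E2 → E2 → E2} (H : TS h) {v k : E2} (hk : KK h v k) {t : ℝ} (ht : 0 ≤ t) :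
    KK h v (t • k) := by
  rw [H.KK_iff] at *
  intro X'
  rw [dt_smul_left]
  exact mul_nonpos_of_nonneg_of_nonpos ht (hk X')

lemma TS.KK_of1 {h : E2 → E2 → E2} (H : TS h) {X Y u : E2} (hu : h X Y = u) : KK h u (X - u) := by
  unfold KK
  rw [add_sub_cancel]
  exact H.to2 hu

lemma TS.KK_of2 {h : E2 → E2 → E2} (H : TS h) {X Y u : E2} (hu : h X Y = u) :
    KK (fun X Y => h Y X) u (Y - u) := H.flip.KK_of1 hu

lemma TS.ray {h : E2 → E2 → E2} (H : TS h) {v k : E2} (hk : KK h v k) {t : ℝ} (ht : 0 ≤ t) :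
    KK h (v + t • k) k := by
  have h1 : h (v + t • k + k) v = v := by
    have := H.KK_smul hk (t := t + 1) (by linarith)
    unfold KK at this
    rwa [add_smul, one_smul, ← add_assoc] at this
  unfold KK
  set X := v + t • k + k with hX
  set u := h X (v + t • k) with hu
  have a := H.vi2 X (v + t • k) v
  have b := H.vi2 X (v + t • k) X
  rw [h1, ← hu] at a
  rw [H.un, ← hu] at b
  symm
  apply eq_of_dt
  have e1 : v - u = (v + t • k - u) - t • k := by abel
  have e2 : X - u = (v + t • k - u) + k := by rw [hX]; abel
  rw [e1] at a
  rw [e2] at b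
  generalize v + t • k - u = p at *
  simp only [dt_sub_right, dt_add_right, dt_smul_right] at a b
  have := dt_nonneg p
  nlinarith

structure ON (e n : E2) : Prop where
  ee : dt e e = 1
  nn : dt n n = 1
  en : dt e n = 0

lemma ON.fr {e n : E2} (o : ON e n) (z w : E2) : dt z w = dt z e * dt w e + dt z n * dt w n := by
  have f (z w : E2) := dt_frame e z w
  simp only [o.ee, one_mul] at f
  have a : dt n (JJ e) * dt n (JJ e) = 1 := by
    have := f n n
    rw [o.nn, dt_comm n e, o.en] at this
    linarith
  rw [f z w, f z n, f w n, dt_comm n e, o.en]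
  linear_combination (-(dt z (JJ e)) * dt w (JJ e)) * a

lemma ON.neg {e n : E2} (o : ON e n) : ON e (-n) :=
  ⟨o.ee, by simp only [dt_neg_left, dt_neg_right, neg_neg]; exact o.nn, by rw [dt_neg_right, o.en, neg_zero]⟩

lemma ON.symm {e n : E2} (o : ON e n) : ON n e := ⟨o.nn, o.ee, by rw [dt_comm]; exact o.en⟩

lemma ON.JJ {e : E2} (he : dt e e = 1) : ON e (JJ e) := ⟨he, by rw [dt_JJ, he], dt_e_JJ e⟩

lemma ON.eq {e n : E2} (o : ON e n) {z w : E2} (h1 : dt z e = dt w e) (h2 : dt z n = dt w n) : z = w := by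
  apply eq_of_dt
  rw [o.fr]
  simp only [dt_sub_left, h1, h2, sub_self, mul_zero, add_zero, le_refl]

lemma fan_real {s l z1 z2 u1 u2 : ℝ} (hs : 0 ≤ s) (hl : 0 ≤ l) (h1 : z2 ≤ 0)
    (h2 : (s-z1)*(-z1) + (l-z2)*(-z2) ≤ 0)
    (h3 : (s-u1)*(s-u1)+(l-u2)*(-u2) ≤ 0)
    (h4 : (s-u1)*(z1-u1) + (-u2)*(z2-u2) ≤ 0) :
    0 ≤ u1 ∧ 0 ≤ u2 ∧ u2 ≤ s/2 ∧ ((u1 = s ∧ u2 = 0) ∨ u1 < s) := by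
  have a0 : 0 ≤ (l - z2) * (-z2) := mul_nonneg (by linarith) (by linarith)
  have a1 : 0 ≤ z1 * (s - z1) := by linarith
  have a2 : 0 ≤ z1 := by by_contra hc; push Not at hc; nlinarith
  have a3 : z1 ≤ s := by by_contra hc; push Not at hc; nlinarith
  have a4 : 0 ≤ u2 := by by_contra hc; push Not at hc; nlinarith [sq_nonneg (s-u1)]
  rcases a4.eq_or_lt with h | h
  · rw [← h] at h3 ⊢
    have : s - u1 = 0 := by
      have : (s-u1)*(s-u1) ≤ 0 := by linarith
      nlinarith [mul_self_nonneg (s-u1)]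
    refine ⟨by linarith, le_refl _, by linarith, Or.inl ⟨by linarith, rfl⟩⟩
  · have a5 : 0 < u2 * (u2 - z2) := mul_pos h (by linarith)
    have a6 : 0 < (s-u1)*(u1-z1) := by linarith
    have a7 : u1 < s := by
      by_contra hc
      push Not at hc
      nlinarith
    have a8 : z1 < u1 := by
      by_contra hc
      push Not at hc
      nlinarith
    refine ⟨by linarith, a4, ?_, Or.inr a7⟩
    have b1 : u2 * u2 ≤ (s-u1)*u1 := by nlinarith
    by_contra hc
    push Not at hc
    nlinarith [sq_nonneg (s - 2*u1)]

lemma TS.fan {h : E2 → E2 → E2} (H : TS h) {e n w : E2} (o : ON e n) (hk : KK h w e) {s l : ℝ}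
    (hs : 0 ≤ s) (hl : 0 ≤ l) {u : E2} (hu : h (w + s • n + l • e) (w + s • n) = u) :
    0 ≤ dt (u - w) n ∧ 0 ≤ dt (u - w) e ∧ dt (u - w) e ≤ s / 2 ∧
      ((dt (u - w) n = s ∧ dt (u - w) e = 0) ∨ dt (u - w) n < s) := by
  set X := w + s • n + l • e with hX
  set Y := w + s • n with hY
  set z := h X w with hz
  have a1 := (H.KK_iff w e).1 hk X
  have a2 := H.disc hz.symm
  have a3 := H.disc hu
  have a4 := H.vi2 X Y w
  rw [hu, ← hz] at a4
  rw [← hz, dt_comm] at a1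
  have r1 : X - z = (s • n + l • e) - (z - w) := by rw [hX, hY]; abel
  have r2 : w - z = - (z - w) := by abel
  have r3 : X - u = (s • n + l • e) - (u - w) := by rw [hX, hY]; abel
  have r4 : Y - u = s • n - (u - w) := by rw [hY]; abel
  have r5 : z - u = (z - w) - (u - w) := by abel
  rw [r1, r2] at a2
  rw [r3, r4] at a3
  rw [r4, r5] at a4
  generalize z - w = z at *
  generalize u - w = u at *
  rw [o.fr] at a2 a3 a4
  simp only [dt_sub_left, dt_add_left, dt_smul_left, dt_neg_left, o.ee, o.nn, o.en, o.symm.en] at a2 a3 a4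
  exact fan_real (z1 := dt z n) hs hl a1 (by linarith) (by linarith) (by linarith)

lemma TS.fan' {h : E2 → E2 → E2} (H : TS h) {e n w : E2} (o : ON e n) (hk : KK h w e) {s : ℝ}
    (hs : 0 ≤ s) :
    KK h (w + s • n) e ∨ dt (h (w + s • n + e) (w + s • n) - (w + s • n)) n < 0 := by
  have := H.fan o hk hs zero_le_one rfl
  rw [one_smul] at this
  obtain ⟨-, -, -, c | c⟩ := this
  · left
    unfold KK
    have : h (w + s • n + e) (w + s • n) - w = s • n := by
      apply o.eq
      · rw [c.2, dt_smul_left, o.symm.en, mul_zero]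
      · rw [c.1, dt_smul_left, o.nn, mul_one]
    rw [sub_eq_iff_eq_add.mp this, add_comm]
  · right
    rw [← sub_sub, dt_sub_left, dt_smul_left, o.nn]
    linarith

lemma dt_continuous : Continuous (fun p : E2 × E2 => dt p.1 p.2) := by
  unfold dt
  fun_prop

lemma dt_tendsto {ι : Type*} {l : Filter ι} {a b : ι → E2} {x y : E2}
    (ha : Filter.Tendsto a l (nhds x)) (hb : Filter.Tendsto b l (nhds y)) :
    Filter.Tendsto (fun i => dt (a i) (b i)) l (nhds (dt x y)) :=
  (dt_continuous.tendsto (x, y)).comp (ha.prodMk_nhds hb)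

lemma TS.tendsto {h : E2 → E2 → E2} (H : TS h) {ι : Type*} {l : Filter ι} {a b : ι → E2} {x y : E2}
    (ha : Filter.Tendsto a l (nhds x)) (hb : Filter.Tendsto b l (nhds y)) :
    Filter.Tendsto (fun i => h (a i) (b i)) l (nhds (h x y)) :=
  (H.cont.tendsto (x, y)).comp (ha.prodMk_nhds hb)

lemma TS.KK_closed {h : E2 → E2 → E2} (H : TS h) : IsClosed {p : E2 × E2 | KK h p.1 p.2} := by
  have := H.cont
  apply isClosed_eq
  · exact this.comp (f := fun p : E2 × E2 => (p.1 + p.2, p.1)) (by fun_prop)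
  · fun_prop

lemma TS.sub {h : E2 → E2 → E2} (H : TS h) {e n w : E2} (o : ON e n) (hk : KK h w e) {s : ℝ}
    (hs : 0 < s) : ∃ s' l' : ℝ, 0 < s' ∧ l' ≤ s / 2 ∧ KK h (w + s' • n + l' • e) e := by
  set Y := w + s • n with hY
  set u : ℕ → E2 := fun N => h (Y + ((N : ℝ) + 1) • e) Y with hu
  set S : Set E2 := {y | 0 ≤ dt (y - w) n ∧ dt (y - w) n ≤ s ∧ 0 ≤ dt (y - w) e ∧ dt (y - w) e ≤ s / 2}
    with hS
  have hcl : IsClosed S := by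
    have c1 : Continuous (fun y : E2 => dt (y - w) n) :=
      dt_continuous.comp (f := fun y : E2 => (y - w, n)) (by fun_prop)
    have c2 : Continuous (fun y : E2 => dt (y - w) e) :=
      dt_continuous.comp (f := fun y : E2 => (y - w, e)) (by fun_prop)
    exact ((isClosed_le continuous_const c1).inter ((isClosed_le c1 continuous_const).inter
      ((isClosed_le continuous_const c2).inter (isClosed_le c2 continuous_const))))
  have hbd : Bornology.IsBounded S := by
    rw [Metric.isBounded_iff_subset_closedBall w]
    refine ⟨2 * s, fun y hy => ?_⟩
    obtain ⟨h1, h2, h3, h4⟩ := hy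
    rw [Metric.mem_closedBall]
    have := dist_dt y w
    rw [o.fr] at this
    apply le_of_sq_le_sq _ (by positivity)
    nlinarith
  have huS : ∀ N, u N ∈ S := by
    intro N
    obtain ⟨h1, h2, h3, h4⟩ := H.fan o hk hs.le (l := (N : ℝ) + 1) (by positivity) (u := u N) rfl
    refine ⟨h1, ?_, h2, h3⟩
    rcases h4 with h4 | h4
    · exact h4.1.le
    · exact h4.le
  obtain ⟨v, hv, φ, hφ, hlim⟩ := tendsto_subseq_of_bounded hbd huS
  rw [hcl.closure_eq] at hv
  obtain ⟨g1, g2, g3, g4⟩ := hv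
  have hv : h (v + e) Y = v := by
    have t1 : Filter.Tendsto (fun k => 1 / (((φ k : ℕ) : ℝ) + 1)) Filter.atTop (nhds 0) :=
      tendsto_one_div_add_atTop_nhds_zero_nat.comp hφ.tendsto_atTop
    have t2 : Filter.Tendsto (fun k => u (φ k) + ((1 / (((φ k : ℕ) : ℝ) + 1)) • (Y - u (φ k)) + e))
        Filter.atTop (nhds (v + ((0:ℝ) • (Y - v) + e))) :=
      hlim.add ((t1.smul (tendsto_const_nhds.sub hlim)).add tendsto_const_nhds)
    rw [zero_smul, zero_add] at t2
    have t3 := H.tendsto t2 (tendsto_const_nhds (x := Y))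
    refine tendsto_nhds_unique t3 (hlim.congr fun k => ?_)
    have hp : (0:ℝ) < ((φ k : ℕ) : ℝ) + 1 := by positivity
    have := H.seg1 (X := Y + (((φ k : ℕ) : ℝ) + 1) • e) (Y := Y) (u := u (φ k)) rfl
      (t := 1 / (((φ k : ℕ) : ℝ) + 1)) (by positivity) (by rw [div_le_one hp]; linarith)
    rw [Function.comp]
    rw [← this]
    congr 1
    rw [this, add_sub_right_comm, smul_add, smul_smul, one_div_mul_cancel hp.ne', one_smul]
  have vi := fun X' => H.vi1 (v + e) X' Y
  rw [hv] at vi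
  rw [add_sub_cancel_left] at vi
  rcases g3.eq_or_lt with g | g
  · refine ⟨s, 0, hs, by linarith, ?_⟩
    rw [zero_smul, add_zero, ← hY, H.KK_iff]
    intro X'
    have a1 := vi X'
    have a2 : dt e (Y - v) = 0 := by
      have : Y - v = s • n - (v - w) := by rw [hY]; abel
      rw [this, dt_comm, dt_sub_left, dt_smul_left, o.symm.en, ← g]; ring
    have : h X' Y - Y = (h X' Y - v) - (Y - v) := by abel
    rw [this, dt_sub_right]; linarith
  · refine ⟨dt (v - w) n, dt (v - w) e, ?_, g4, ?_⟩
    · set X := v + e with hX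
      set z := h X w with hz
      have a1 := (H.KK_iff w e).1 hk X
      have a2 := H.disc hz.symm
      have a4 := H.vi2 X Y w
      rw [hv, ← hz] at a4
      rw [← hz, dt_comm] at a1
      have r1 : X - z = e + (v - w) - (z - w) := by rw [hX]; abel
      have r2 : w - z = - (z - w) := by abel
      have r4 : Y - v = s • n - (v - w) := by rw [hY]; abel
      have r5 : z - v = (z - w) - (v - w) := by abel
      rw [r1, r2] at a2
      rw [r4, r5] at a4
      generalize z - w = z at *
      generalize v - w = v at *
      rw [o.fr] at a2 a4
      simp only [dt_sub_left, dt_add_left, dt_smul_left, dt_neg_left, o.ee, o.nn, o.en, o.symm.en] at a2 a4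
      have b1 : 0 ≤ (1 + dt v e - dt z e) * (- dt z e) := mul_nonneg (by linarith) (by linarith)
      have b2 : 0 ≤ dt z n * (dt v n - dt z n) := by linarith
      have b3 : 0 ≤ dt z n := by by_contra hc; push Not at hc; nlinarith
      have b4 : 0 < dt v e * (dt v e - dt z e) := mul_pos g (by linarith)
      by_contra hc
      push Not at hc
      nlinarith
    · have : w + dt (v - w) n • n + dt (v - w) e • e = v := by
        have : dt (v - w) n • n + dt (v - w) e • e = v - w := by
          apply o.eq
          · simp only [dt_add_left, dt_smul_left, o.ee, o.symm.en]; ring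
          · simp only [dt_add_left, dt_smul_left, o.nn, o.en]; ring
        rw [add_assoc, this]; abel
      rw [this]
      exact H.to2 hv

lemma dt_abs_le {a n : E2} (hn : dt n n = 1) : |dt a n| ≤ ‖a‖ := by
  have h1 : ‖n‖ = 1 := by
    have := norm_dt n
    rw [hn] at this
    nlinarith [norm_nonneg n]
  rw [abs_le]
  constructor
  · have := dt_CS (-a) n
    rw [dt_neg_left, norm_neg, h1] at this
    linarith
  · have := dt_CS a n
    rw [h1] at this
    linarith

lemma TS.lemA' {h : E2 → E2 → E2} (H : TS h) {e n w : E2} (o : ON e n) (hk : KK h w e) {t : ℝ}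
    (ht : 0 < t) : ∃ r > 0, ∀ Y, dist Y (w + t • e) < r → KK h Y e := by
  obtain ⟨s1, l1, hs1, hl1, k1⟩ := H.sub o hk ht
  obtain ⟨s2, l2, hs2, hl2, k2⟩ := H.sub o.neg hk ht
  refine ⟨min (min s1 s2) (t / 2), by positivity, fun Y hY => ?_⟩
  rw [lt_min_iff, lt_min_iff, dist_eq_norm] at hY
  have a1 := dt_abs_le (a := Y - (w + t • e)) o.nn
  have a2 := dt_abs_le (a := Y - (w + t • e)) o.ee
  rw [← sub_sub, dt_sub_left, dt_smul_left] at a1 a2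
  rw [sub_sub] at a1 a2
  rw [o.en] at a1
  rw [o.ee] at a2
  rw [abs_le] at a1 a2
  obtain ⟨⟨y1, y2⟩, y3⟩ := hY
  have c2 : t / 2 ≤ dt (Y - w) e := by linarith
  have hYe : ∀ s l : ℝ, ∀ m : E2, m = n ∨ m = -n → w + s • m + l • e + (dt (Y - w) e - l) • e + (s - dt (Y - w) m) • (-m) = Y := by
    intro s l m hm
    have om : ON e m := by
      rcases hm with rfl | rfl
      · exact o
      · exact o.neg
    have : s • m + l • e + (dt (Y - w) e - l) • e + (s - dt (Y - w) m) • (-m) = Y - w := by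
      apply om.eq
      · simp only [dt_add_left, dt_smul_left, om.ee, om.symm.en, dt_neg_left]; ring
      · simp only [dt_add_left, dt_smul_left, om.nn, om.en, dt_neg_left]; ring
    rw [add_assoc, add_assoc, add_assoc, ← add_assoc (l • e), ← add_assoc (s • m), ← add_assoc (s • m), this]; abel
  have f1 := H.fan' o.neg (H.ray k1 (t := dt (Y - w) e - l1) (by linarith)) (s := s1 - dt (Y - w) n) (by linarith)
  have f2 := H.fan' o (H.ray k2 (t := dt (Y - w) e - l2) (by linarith)) (s := s2 - dt (Y - w) (-n))
    (by rw [dt_neg_right]; linarith)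
  rw [hYe s1 l1 n (Or.inl rfl)] at f1
  have := hYe s2 l2 (-n) (Or.inr rfl)
  rw [neg_neg] at this
  rw [this] at f2
  rcases f1 with f1 | f1
  · exact f1
  rcases f2 with f2 | f2
  · exact f2
  rw [dt_neg_right] at f1
  linarith

lemma unit_of {e : E2} (he : e ≠ 0) : dt (‖e‖⁻¹ • e) (‖e‖⁻¹ • e) = 1 := by
  have : ‖e‖ ≠ 0 := norm_ne_zero_iff.mpr he
  rw [dt_smul_left, dt_smul_right, ← norm_dt]
  field_simp

lemma TS.lemA {h : E2 → E2 → E2} (H : TS h) {e w : E2} (he : e ≠ 0) (hk : KK h w e) {t : ℝ}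
    (ht : 0 < t) : ∃ r > 0, ∀ Y, dist Y (w + t • e) < r → KK h Y e := by
  have hn : 0 < ‖e‖ := norm_pos_iff.mpr he
  obtain ⟨r, hr, hY⟩ := H.lemA' (ON.JJ (unit_of he)) (H.KK_smul hk (t := ‖e‖⁻¹) (by positivity))
    (t := t * ‖e‖) (by positivity)
  refine ⟨r, hr, fun Y h1 => ?_⟩
  have := hY Y (by rwa [smul_smul, mul_assoc, mul_inv_cancel₀ hn.ne', mul_one])
  have := H.KK_smul this hn.le
  rwa [smul_smul, mul_inv_cancel₀ hn.ne', one_smul] at this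


structure FS (G : E2 → E2 → E2 → E2 → E2 → E2) : Prop where
  sp5 : ∀ a b c d e e', dt (G a b c d e - e) (G a b c d e - e) ≤ dt (G a b c d e' - e) (G a b c d e' - e)
  un : ∀ a, G a a a a a = a
  s12 : ∀ a b c d e, G a b c d e = G b a c d e
  s23 : ∀ a b c d e, G a b c d e = G a c b d e
  s34 : ∀ a b c d e, G a b c d e = G a b d c e
  s45 : ∀ a b c d e, G a b c d e = G a b c e d

abbrev h1 (G : E2 → E2 → E2 → E2 → E2 → E2) : E2 → E2 → E2 := fun X Y => G X X X X Y
abbrev h2 (G : E2 → E2 → E2 → E2 → E2 → E2) : E2 → E2 → E2 := fun X Y => G X X X Y Y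
abbrev h3 (G : E2 → E2 → E2 → E2 → E2 → E2) : E2 → E2 → E2 := fun X Y => h2 G Y X
abbrev h4 (G : E2 → E2 → E2 → E2 → E2 → E2) : E2 → E2 → E2 := fun X Y => h1 G Y X

section
variable {G : E2 → E2 → E2 → E2 → E2 → E2}

lemma FS.sp4 (H : FS G) (a b c d d' e : E2) :
    dt (G a b c d e - d) (G a b c d e - d) ≤ dt (G a b c d' e - d) (G a b c d' e - d) := by
  rw [H.s45 a b c d e, H.s45 a b c d' e]; exact H.sp5 _ _ _ _ _ _
lemma FS.sp3 (H : FS G) (a b c c' d e : E2) :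
    dt (G a b c d e - c) (G a b c d e - c) ≤ dt (G a b c' d e - c) (G a b c' d e - c) := by
  rw [H.s34 a b c d e, H.s34 a b c' d e]; exact H.sp4 _ _ _ _ _ _
lemma FS.sp2 (H : FS G) (a b b' c d e : E2) :
    dt (G a b c d e - b) (G a b c d e - b) ≤ dt (G a b' c d e - b) (G a b' c d e - b) := by
  rw [H.s23 a b c d e, H.s23 a b' c d e]; exact H.sp3 _ _ _ _ _ _
lemma FS.sp1 (H : FS G) (a a' b c d e : E2) :
    dt (G a b c d e - a) (G a b c d e - a) ≤ dt (G a' b c d e - a) (G a' b c d e - a) := by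
  rw [H.s12 a b c d e, H.s12 a' b c d e]; exact H.sp2 _ _ _ _ _ _

lemma FS.r5 (H : FS G) {a b c d e u : E2} (h : G a b c d e = u) : G a b c d u = u := by
  have := H.sp5 a b c d u e
  rw [h, sub_self, dt_zero_left] at this
  exact eq_of_dt this
lemma FS.r4 (H : FS G) {a b c d e u : E2} (h : G a b c d e = u) : G a b c u e = u := by
  have := H.sp4 a b c u d e
  rw [h, sub_self, dt_zero_left] at this
  exact eq_of_dt this
lemma FS.r3 (H : FS G) {a b c d e u : E2} (h : G a b c d e = u) : G a b u d e = u := by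
  have := H.sp3 a b u c d e
  rw [h, sub_self, dt_zero_left] at this
  exact eq_of_dt this
lemma FS.r2 (H : FS G) {a b c d e u : E2} (h : G a b c d e = u) : G a u c d e = u := by
  have := H.sp2 a u b c d e
  rw [h, sub_self, dt_zero_left] at this
  exact eq_of_dt this
lemma FS.r1 (H : FS G) {a b c d e u : E2} (h : G a b c d e = u) : G u b c d e = u := by
  have := H.sp1 u a b c d e
  rw [h, sub_self, dt_zero_left] at this
  exact eq_of_dt this

lemma FS.sp34 (H : FS G) (a b X X' e : E2) :
    dt (G a b X X e - X) (G a b X X e - X) ≤ dt (G a b X' X' e - X) (G a b X' X' e - X) :=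
  (H.sp4 a b X X X' e).trans (H.sp3 a b X X' X' e)

lemma FS.t1 (H : FS G) : TS (h1 G) :=
  ⟨fun X X' Y => (H.sp4 X X X X X' Y).trans ((H.sp3 X X X X' X' Y).trans
      ((H.sp2 X X X' X' X' Y).trans (H.sp1 X X' X' X' X' Y))),
   fun X Y Y' => H.sp5 X X X X Y Y', H.un⟩

lemma FS.t2 (H : FS G) : TS (h2 G) :=
  ⟨fun X X' Y => ((H.sp3 X X X X' Y Y).trans
      ((H.sp2 X X X' X' Y Y).trans (H.sp1 X X' X' X' Y Y))),
   fun X Y Y' => (H.sp5 X X X Y Y Y').trans (H.sp4 X X X Y Y' Y'), H.un⟩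

lemma FS.t3 (H : FS G) : TS (h3 G) := H.t2.flip
lemma FS.t4 (H : FS G) : TS (h4 G) := H.t1.flip

lemma FS.k12 (H : FS G) {v k : E2} (h : KK (h1 G) v k) : KK (h2 G) v k := H.r4 h
lemma FS.k23 (H : FS G) {v k : E2} (h : KK (h2 G) v k) : KK (h3 G) v k := by
  have h : G (v+k) (v+k) (v+k) v v = v := h
  have := H.r3 h
  show G v v v (v+k) (v+k) = v
  rw [H.s34, H.s23, H.s12, H.s45, H.s34, H.s23]
  exact this
lemma FS.k34 (H : FS G) {v k : E2} (h : KK (h3 G) v k) : KK (h4 G) v k := H.r4 h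

lemma FS.o32 (H : FS G) {X Y Z v : E2} (h : G X X X Y Z = v) : KK (h2 G) v (X - v) := by
  show G _ _ _ _ _ = v
  rw [add_sub_cancel]
  exact H.r4 (H.r5 h)
lemma FS.o14 (H : FS G) {X Y Z v : E2} (h : G X X X Y Z = v) : KK (h4 G) v (Y - v) := by
  show G _ _ _ _ _ = v
  rw [add_sub_cancel, H.s45]
  exact H.r1 (H.r2 (H.r3 (H.r5 h)))
lemma FS.o23b (H : FS G) {X Y Z v : E2} (h : G X X Y Y Z = v) : KK (h3 G) v (Y - v) := by
  show G _ _ _ _ _ = v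
  rw [add_sub_cancel, H.s34, H.s45, H.s34]
  exact H.r1 (H.r2 (H.r5 h))
lemma FS.o23a (H : FS G) {X Y Z v : E2} (h : G X X Y Y Z = v) : KK (h3 G) v (X - v) := by
  apply H.o23b (X := Y) (Z := Z)
  rw [H.s23, H.s12, H.s34, H.s23]
  exact h

lemma TS.dual {h : E2 → E2 → E2} (H : TS h) {u e k : E2} {t : ℝ} (ht : 0 < t)
    (h1 : KK h (u - t • e) e) (h2 : KK (fun X Y => h Y X) u k) : 0 ≤ dt k e := by
  have a : h u (u - t • e) = u - t • e := by
    have := H.KK_smul h1 ht.le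
    unfold KK at this
    rwa [sub_add_cancel] at this
  have b := (H.flip.KK_iff u k).1 h2 (u - t • e)
  rw [a, sub_sub_cancel_left, dt_neg_right, dt_smul_right] at b
  have : 0 ≤ t * dt k e := by linarith
  exact nonneg_of_mul_nonneg_right this ht

lemma ball_step {c0 u e : E2} {ρ : ℝ} (hu : dist u c0 < ρ) :
    ∃ t : ℝ, 0 < t ∧ dist (u - t • e) c0 < ρ := by
  refine ⟨(ρ - dist u c0) / (2 * (‖e‖ + 1)), div_pos (by linarith) (by positivity), ?_⟩
  set t := (ρ - dist u c0) / (2 * (‖e‖ + 1)) with ht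
  have tp : 0 < t := div_pos (by linarith) (by positivity)
  have h1 : dist (u - t • e) u = t * ‖e‖ := by
    rw [dist_eq_norm, sub_sub_cancel_left, norm_neg, norm_smul, Real.norm_of_nonneg tp.le]
  have h2 := dist_triangle (u - t • e) u c0
  have h3 : t * (2 * (‖e‖ + 1)) = ρ - dist u c0 := div_mul_cancel₀ _ (by positivity)
  nlinarith [norm_nonneg e]

lemma TS.dual_ball {h : E2 → E2 → E2} (H : TS h) {c0 u e k : E2} {ρ : ℝ}
    (hb : ∀ v, dist v c0 < ρ → KK h v e) (hu : dist u c0 < ρ)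
    (h2 : KK (fun X Y => h Y X) u k) : 0 ≤ dt k e := by
  obtain ⟨t, ht, ht2⟩ := ball_step (e := e) hu
  exact H.dual ht (hb _ ht2) h2

lemma norm_one {e : E2} (he : dt e e = 1) : ‖e‖ = 1 := by
  have := norm_dt e
  rw [he] at this
  nlinarith [norm_nonneg e]

lemma sqrt2b : Real.sqrt 2 * Real.sqrt 2 = 2 ∧ 1 < Real.sqrt 2 ∧ Real.sqrt 2 < 2 := by
  have h1 : Real.sqrt 2 * Real.sqrt 2 = 2 := Real.mul_self_sqrt (by norm_num)
  have h2 := Real.sqrt_nonneg 2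
  refine ⟨h1, ?_, ?_⟩ <;> nlinarith

lemma final_geo {a b c0 v : E2} (o : ON a b) {ρ r : ℝ} (hr : 0 < r) (hρ : 4 * r ≤ ρ)
    (hv : dist v c0 < ρ → 0 ≤ dt (c0 - r • a - v) a ∧ 0 ≤ dt (c0 - r • b - v) b) :
    (1 + Real.sqrt 2) * r ≤ dist v (c0 + (r / Real.sqrt 2) • (a + b)) ∧
    dist c0 (c0 + (r / Real.sqrt 2) • (a + b)) ≤ r := by
  obtain ⟨q1, q2, q3⟩ := sqrt2b
  have hab : ‖a + b‖ = Real.sqrt 2 := by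
    have := norm_dt (a + b)
    simp only [dt_add_left, dt_add_right, o.ee, o.nn, o.en, o.symm.en] at this
    rw [← Real.sqrt_sq (norm_nonneg (a + b)), this]
    norm_num
  have hd : dist c0 (c0 + (r / Real.sqrt 2) • (a + b)) = r := by
    rw [dist_eq_norm, sub_add_cancel_left, norm_neg, norm_smul, hab, Real.norm_of_nonneg (by positivity)]
    field_simp
  refine ⟨?_, hd.le⟩
  set Z := c0 + (r / Real.sqrt 2) • (a + b) with hZ
  by_cases hc : dist v c0 < ρ
  · obtain ⟨c1, c2⟩ := hv hc
    have cs := dt_CS (Z - v) (a + b)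
    rw [hab, ← dist_eq_norm, dist_comm] at cs
    have e1 : dt (Z - v) (a + b) = dt (c0 - r • a - v) a + dt (c0 - r • b - v) b + r + r + (r / Real.sqrt 2) * 2 := by
      rw [hZ]
      simp only [dt_sub_left, dt_add_left, dt_add_right, dt_smul_left, o.ee, o.nn, o.en, o.symm.en]
      ring
    have e2 : (r / Real.sqrt 2) * 2 = r * Real.sqrt 2 := by
      field_simp
      linarith
    rw [e1, e2] at cs
    have : (1 + Real.sqrt 2) * r * Real.sqrt 2 ≤ dist v Z * Real.sqrt 2 := by nlinarith
    exact le_of_mul_le_mul_right this (by linarith)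
  · push Not at hc
    have := dist_triangle v Z c0
    rw [dist_comm Z c0, hd] at this
    nlinarith

def Bad (G : E2 → E2 → E2 → E2 → E2 → E2) : Prop :=
  ∃ a b c d e c0 : E2, ∃ r : ℝ, 0 < r ∧ dist c0 a ≤ r ∧ dist c0 b ≤ r ∧ dist c0 c ≤ r ∧ dist c0 d ≤ r
    ∧ dist c0 e ≤ r ∧ a ≠ d ∧ (1 + Real.sqrt 2) * r ≤ dist (G a b c d e) e

lemma dist_c {a c0 : E2} {r : ℝ} (hr : 0 < r) (ha : dt a a = 1) : dist c0 (c0 - r • a) ≤ r := by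
  rw [dist_eq_norm, sub_sub_cancel, norm_smul, norm_one ha, Real.norm_of_nonneg hr.le, mul_one]

lemma ne_c {a b c0 : E2} {r : ℝ} (hr : 0 < r) (o : ON a b) : c0 - r • a ≠ c0 - r • b := by
  intro h
  have h := sub_right_injective h
  have : dt (r • a) a = dt (r • b) a := by rw [h]
  rw [dt_smul_left, dt_smul_left, o.ee, o.symm.en] at this
  linarith

lemma FS.final1 (H : FS G) {e n c0 : E2} {ρ : ℝ} (hρ : 0 < ρ) (o : ON e n)
    (he : ∀ v, dist v c0 < ρ → KK (h1 G) v e) (hn : ∀ v, dist v c0 < ρ → KK (h3 G) v n) : Bad G := by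
  have hr : 0 < ρ / 4 := by positivity
  have := final_geo (a := n) (b := e) (c0 := c0) (ρ := ρ) (r := ρ/4)
    (v := G (c0 - (ρ/4) • n) (c0 - (ρ/4) • n) (c0 - (ρ/4) • n) (c0 - (ρ/4) • e)
      (c0 + ((ρ/4) / Real.sqrt 2) • (n + e))) o.symm hr (by linarith) (fun hv =>
      ⟨H.t3.dual_ball hn hv (H.o32 rfl), H.t1.dual_ball he hv (H.o14 rfl)⟩)
  exact ⟨_, _, _, _, _, c0, ρ/4, hr, dist_c hr o.nn, dist_c hr o.nn, dist_c hr o.nn, dist_c hr o.ee, this.2,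
    ne_c hr o.symm, this.1⟩

lemma FS.final2 (H : FS G) {a b c0 : E2} {ρ : ℝ} (hρ : 0 < ρ) (o : ON a b)
    (hk : ∀ v k, dist v c0 < ρ → KK (h3 G) v k → 0 ≤ dt k a ∧ 0 ≤ dt k b) : Bad G := by
  have hr : 0 < ρ / 4 := by positivity
  have := final_geo (a := a) (b := b) (c0 := c0) (ρ := ρ) (r := ρ/4)
    (v := G (c0 - (ρ/4) • a) (c0 - (ρ/4) • a) (c0 - (ρ/4) • b) (c0 - (ρ/4) • b)
      (c0 + ((ρ/4) / Real.sqrt 2) • (a + b))) o hr (by linarith) (fun hv =>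
      ⟨(hk _ _ hv (H.o23a rfl)).1, (hk _ _ hv (H.o23b rfl)).2⟩)
  exact ⟨_, _, _, _, _, c0, ρ/4, hr, dist_c hr o.ee, dist_c hr o.ee, dist_c hr o.nn, dist_c hr o.nn, this.2,
    ne_c hr o, this.1⟩

end


section
variable {G : E2 → E2 → E2 → E2 → E2 → E2}

lemma FS.eta (H : FS G) {e n c0 : E2} {ρ' ρ : ℝ} (hρ : ρ < ρ') (o : ON e n)
    (he : ∀ v, dist v c0 < ρ' → KK (h1 G) v e)
    (hn1 : ∀ v, dist v c0 < ρ' → ¬ KK (h3 G) v n) (hn2 : ∀ v, dist v c0 < ρ' → ¬ KK (h3 G) v (-n)) :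
    ∃ η : ℝ, 0 < η ∧ ∀ v k, dist v c0 ≤ ρ → KK (h3 G) v k → η * ‖k‖ ≤ dt k e := by
  set S : Set (E2 × E2) := (Metric.closedBall c0 ρ ×ˢ Metric.sphere (0 : E2) 1) ∩ {p | KK (h3 G) p.1 p.2}
  have hS : IsCompact S :=
    ((isCompact_closedBall c0 ρ).prod (isCompact_sphere (0:E2) 1)).inter_right H.t3.KK_closed
  have hc : Continuous (fun p : E2 × E2 => dt p.2 e) :=
    dt_continuous.comp (f := fun p : E2 × E2 => (p.2, e)) (by fun_prop)
  obtain ⟨η, h0, hη⟩ := hS.exists_forall_le' hc.continuousOn (a := 0) (by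
    rintro ⟨v, k⟩ ⟨⟨hv, hk⟩, hK⟩
    simp only [Metric.mem_closedBall, mem_sphere_iff_norm, sub_zero] at hv hk
    have hv' : dist v c0 < ρ' := by simpa using lt_of_le_of_lt hv hρ
    have hK : KK (h3 G) v k := hK
    have h1 : 0 ≤ dt k e := H.t1.dual_ball he hv' (H.k34 hK)
    refine lt_of_le_of_ne h1 fun h2 => ?_
    have h2 : dt k e = 0 := h2.symm
    have h3 := norm_dt k
    rw [hk, o.fr, h2] at h3
    have h4 : (dt k n - 1) * (dt k n + 1) = 0 := by linarith
    rcases mul_eq_zero.mp h4 with h5 | h5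
    · have : k = n := by
        apply o.eq
        · rw [h2, o.symm.en]
        · rw [o.nn]; linarith
      exact hn1 v hv' (this ▸ hK)
    · have : k = -n := by
        apply o.eq
        · rw [h2, dt_neg_left, o.symm.en, neg_zero]
        · rw [dt_neg_left, o.nn]; linarith
      exact hn2 v hv' (this ▸ hK))
  refine ⟨η, h0, fun v k hv hK => ?_⟩
  by_cases hk : k = 0
  · subst hk; simp [dt_zero_left]
  have hkp : 0 < ‖k‖ := norm_pos_iff.mpr hk
  have := hη (v, ‖k‖⁻¹ • k) ⟨⟨by simpa using hv, by
    simp [norm_smul, hkp.ne']⟩, H.t3.KK_smul hK (by positivity)⟩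
  simp only [dt_smul_left] at this
  rw [inv_mul_eq_div, le_div_iff₀ hkp] at this
  exact this

lemma FS.dlem (H : FS G) {e c0 : E2} {ρ η : ℝ} (hρ : 0 < ρ) (h0 : 0 < η)
    (hK1 : KK (h1 G) c0 e)
    (hη : ∀ v k, dist v c0 ≤ ρ → KK (h3 G) v k → η * ‖k‖ ≤ dt k e) :
    ∃ Z, ∀ v k, dist v c0 ≤ ρ / 8 → ‖k‖ ≤ ρ / 8 → KK (h3 G) v k → G v v (v + k) (v + k) Z = v := by
  set τ := ρ / η with hτ
  have τp : 0 < τ := by positivity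
  have τη : τ * η = ρ := div_mul_cancel₀ _ h0.ne'
  set Z := c0 + τ • e with hZ
  refine ⟨Z, fun v k hv hk hK => ?_⟩
  set u := G v v (v + k) (v + k) Z with hu
  have hcZ : h1 G c0 Z = c0 := H.t4.KK_smul (H.k34 (H.k23 (H.k12 hK1))) τp.le
  have a1 := H.t1.nonexp1 v c0 Z
  rw [hcZ] at a1
  have a2 := dist_le_dt.mpr (H.sp34 v v (v + k) v Z)
  rw [← hu] at a2
  have a3 : dist (v + k) v ≤ ρ / 8 := by rwa [dist_eq_norm, add_sub_cancel_left]
  have a4 : dist u c0 ≤ ρ := by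
    have t1 := dist_triangle u (v + k) c0
    have t2 := dist_triangle (v + k) v c0
    have t3 := dist_triangle (h1 G v Z) c0 (v + k)
    rw [dist_comm c0] at t3
    have : dist (h1 G v Z) (v + k) = dist (G v v v v Z) (v + k) := rfl
    linarith
  have hq : KK (h3 G) u (v - u) := H.o23a hu.symm
  have a5 := hη u _ a4 hq
  have a6 := H.sp5 v v (v + k) (v + k) Z v
  have a7 : G v v (v + k) (v + k) v = v := by
    have : G v v v (v + k) (v + k) = v := hK
    rw [H.s45, H.s34]
    exact this
  rw [a7, ← hu] at a6
  symm
  apply eq_of_dt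
  have r1 : u - Z = (v - Z) - (v - u) := by abel
  rw [r1] at a6
  have r2 : v - Z = (v - c0) - τ • e := by rw [hZ]; abel
  rw [r2] at a6
  have a8 := dt_CS (v - c0) (v - u)
  have a9 : dist v c0 = ‖v - c0‖ := dist_eq_norm _ _
  generalize v - u = q at *
  rw [← a9] at a8
  simp only [dt_sub_left, dt_sub_right, dt_smul_left, dt_smul_right] at a6
  rw [dt_comm q (v), dt_comm q c0, dt_comm q e] at a6
  rw [dt_sub_left] at a8
  rw [dt_comm q e] at a5
  have b1 : τ * (η * ‖q‖) ≤ τ * dt e q := mul_le_mul_of_nonneg_left a5 τp.le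
  rw [← mul_assoc, τη] at b1
  have b2 : dist v c0 * ‖q‖ ≤ ρ * ‖q‖ := mul_le_mul_of_nonneg_right (by linarith) (norm_nonneg q)
  linarith

def Acute (G : E2 → E2 → E2 → E2 → E2 → E2) (c0 : E2) (σ : ℝ) : Prop :=
  ∀ v k b, dist v c0 < σ → KK (h3 G) v k → KK (h3 G) (v - b) b → 0 ≤ dt k b

lemma FS.acute (H : FS G) {c0 Z : E2} {σ : ℝ} (hσ : 0 < σ)
    (hD : ∀ v k, dist v c0 ≤ σ → ‖k‖ ≤ σ → KK (h3 G) v k → G v v (v + k) (v + k) Z = v) :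
    Acute G c0 σ := by
  intro v k b hv hk hb
  have hkn : 0 < ‖k‖ + 1 := by positivity
  -- scale k
  set l := σ / (‖k‖ + 1) with hl
  have lp : 0 < l := by positivity
  have lk : ‖l • k‖ ≤ σ := by
    rw [norm_smul, Real.norm_of_nonneg lp.le, hl, div_mul_eq_mul_div, div_le_iff₀ hkn]
    nlinarith
  have D1 := hD v (l • k) hv.le lk (H.t3.KK_smul hk lp.le)
  set m := min (σ - dist v c0) 1 with hm
  have mp : 0 < m := lt_min (by linarith) one_pos
  set m' := min m σ with hm'
  have mp' : 0 < m' := lt_min mp hσ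
  set t0 := m' / (‖b‖ + m' + 1) with ht0
  have den : 0 < ‖b‖ + m' + 1 := by positivity
  have t0p : 0 < t0 := by positivity
  have t01 : t0 ≤ 1 := by
    rw [ht0, div_le_one den]; linarith [norm_nonneg b]
  have t0b : t0 * ‖b‖ ≤ m' := by
    rw [ht0, div_mul_eq_mul_div, div_le_iff₀ den]
    nlinarith [norm_nonneg b]
  have key : - (2 * l * dt k b) ≤ 0 := by
    apply small_le (M := t0 * dt b b)
    intro s hs hs1
    have sp : 0 < s * t0 := by positivity
    have s1 : s * t0 ≤ 1 := by nlinarith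
    have nb : ‖(s * t0) • b‖ ≤ m' := by
      rw [norm_smul, Real.norm_of_nonneg sp.le]
      nlinarith [norm_nonneg b, mul_nonneg t0p.le (norm_nonneg b)]
    have hb' : KK (h3 G) (v - (s * t0) • b) b := by
      have := H.t3.ray hb (t := 1 - s * t0) (by linarith)
      have e : v - b + (1 - s * t0) • b = v - (s * t0) • b := by
        rw [sub_smul, one_smul]; abel
      rwa [e] at this
    have D2 := hD (v - (s * t0) • b) ((s * t0) • b) (by
      have := dist_triangle (v - (s * t0) • b) v c0
      have e : dist (v - (s * t0) • b) v = ‖(s * t0) • b‖ := by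
        rw [dist_eq_norm, sub_sub_cancel_left, norm_neg]
      have : m' ≤ σ - dist v c0 := (min_le_left _ _).trans (min_le_left _ _)
      linarith) (nb.trans (min_le_right _ _)) (H.t3.KK_smul hb' sp.le)
    rw [sub_add_cancel] at D2
    have D3 : G v v (v - (s * t0) • b) (v - (s * t0) • b) Z = v - (s * t0) • b := by
      rw [H.s23, H.s12, H.s34, H.s23]; exact D2
    have := H.sp34 v v (v + l • k) (v - (s * t0) • b) Z
    rw [D1, D3] at this
    have e1 : v - (v + l • k) = - (l • k) := by abel
    have e2 : v - (s * t0) • b - (v + l • k) = - (l • k) - (s * t0) • b := by abel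
    rw [e1, e2] at this
    simp only [dt_sub_left, dt_sub_right, dt_smul_left, dt_smul_right, dt_neg_left, dt_neg_right] at this
    rw [dt_comm b k] at this
    have : (s * t0) * (-(2 * l * dt k b)) ≤ (s * t0) * (s * (t0 * dt b b)) := by nlinarith
    exact le_of_mul_le_mul_left this sp
  have : 0 ≤ l * dt k b := by linarith
  exact nonneg_of_mul_nonneg_right this lp

lemma FS.k32 (H : FS G) {c0 : E2} {σ : ℝ} (hA : Acute G c0 σ) {v k : E2} (hv : dist v c0 < σ)
    (hk : KK (h3 G) v k) : KK (h2 G) v k := by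
  show h2 G (v + k) v = v
  set w := h2 G (v + k) v with hw
  have a1 := H.t2.KK_of2 hw.symm
  have a2 := H.t2.disc hw.symm
  have a3 := hA v k (v - w) hv hk (by rw [sub_sub_cancel]; exact a1)
  symm
  apply eq_of_dt
  have e : v + k - w = k + (v - w) := by abel
  rw [e, dt_add_left] at a2
  linarith

lemma FS.trans (H : FS G) {c0 : E2} {σ : ℝ} (hA : Acute G c0 σ) {X u v : E2} (hv : dist v c0 < σ)
    (h1 : KK (h2 G) u (X - u)) (hk : KK (h3 G) v (u - v)) : KK (h2 G) v (X - v) := by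
  have g1 : h2 G X u = u := by
    have : h2 G (u + (X - u)) u = u := h1
    rwa [add_sub_cancel] at this
  show h2 G (v + (X - v)) v = v
  rw [add_sub_cancel]
  set y := h2 G X v with hy
  have a1 := H.t2.KK_of2 hy.symm
  have a2 := H.t2.vi2 X v u
  rw [g1, ← hy] at a2
  have a3 := hA v (u - v) (v - y) hv hk (by rw [sub_sub_cancel]; exact a1)
  symm
  apply eq_of_dt
  have e : u - y = (u - v) + (v - y) := by abel
  rw [e, dt_add_right, dt_comm _ (u - v)] at a2
  linarith

lemma TS.optconv {h : E2 → E2 → E2} (H : TS h) {X p q : E2} (hp : h X p = p) (hq : h X q = q)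
    {s : ℝ} (h0 : 0 ≤ s) (h1 : s ≤ 1) {m : E2} (hm : m = p + s • (q - p)) : h X m = m := by
  set y := h X m with hy
  have a := H.vi2 X m p
  have b := H.vi2 X m q
  rw [hp, ← hy] at a
  rw [hq, ← hy] at b
  symm
  apply eq_of_dt
  have e : m - y = (1 - s) • (p - y) + s • (q - y) := by
    rw [hm, sub_smul, one_smul]
    simp only [smul_sub]
    abel
  have : dt (m - y) (m - y) = (1 - s) * dt (m - y) (p - y) + s * dt (m - y) (q - y) := by
    conv_lhs => rw [e, ← e]
    nth_rw 2 [e]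
    rw [dt_add_right, dt_smul_right, dt_smul_right]
  rw [this]
  nlinarith

/-- cone version: three option points u, u + x, u + y -/
lemma TS.optcone {h : E2 → E2 → E2} (H : TS h) {X u x y : E2} (hu : h X u = u) (hx : h X (u + x) = u + x)
    (hy : h X (u + y) = u + y) {α β : ℝ} (ha : 0 ≤ α) (hb : 0 ≤ β) (hab : α + β ≤ 1) :
    h X (u + (α • x + β • y)) = u + (α • x + β • y) := by
  rcases (add_nonneg ha hb).eq_or_lt with h0 | h0
  · have h1 : α = 0 := by linarith
    have h2 : β = 0 := by linarith
    rw [h1, h2, zero_smul, zero_smul, add_zero, add_zero]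
    exact hu
  have h1 : h X (u + x + (β / (α + β)) • (u + y - (u + x))) = u + x + (β / (α + β)) • (u + y - (u + x)) :=
    H.optconv hx hy (by positivity) (by rw [div_le_one h0]; linarith) rfl
  apply H.optconv hu h1 h0.le hab
  have e : u + x + (β / (α + β)) • (u + y - (u + x)) - u = (1 - β / (α + β)) • x + (β / (α + β)) • y := by
    rw [sub_smul, one_smul]
    simp only [smul_sub, smul_add]
    abel
  rw [e, smul_add, smul_smul, smul_smul]
  congr 3
  · field_simp; ring
  · field_simp

end


section
variable {G : E2 → E2 → E2 → E2 → E2 → E2}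

lemma dist_add_self {u x c0 : E2} : dist (u + x) c0 ≤ dist u c0 + ‖x‖ := by
  have := dist_triangle (u + x) u c0
  have e : dist (u + x) u = ‖x‖ := by rw [dist_eq_norm, add_sub_cancel_left]
  linarith

set_option maxHeartbeats 1000000 in
lemma FS.noobtuse (H : FS G) {e n c0 u P Q : E2} {σ ρ' : ℝ} (o : ON e n) (hσ : σ ≤ ρ')
    (he : ∀ v, dist v c0 < ρ' → KK (h1 G) v e) (hA : Acute G c0 σ) (hu : dist u c0 < σ)
    (hn1 : ¬ KK (h3 G) u n) (hP : KK (h2 G) u (P - u)) (hQ : KK (h3 G) u (Q - u)) :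
    0 ≤ dt (P - u) (Q - u) := by
  have hQ2 := H.k32 hA hu hQ
  obtain ⟨x, hx, hxn⟩ : ∃ x, h2 G u (u + x) = u + x ∧ 0 < dt x n := by
    rw [H.t3.KK_iff] at hn1
    push Not at hn1
    obtain ⟨X', hX'⟩ := hn1
    refine ⟨h2 G u X' - u, ?_, by rw [dt_comm]; exact hX'⟩
    rw [add_sub_cancel]
    exact H.t2.to2 rfl
  obtain ⟨t, ht, hte⟩ := ball_step (e := e) hu
  obtain ⟨y, hy⟩ : ∃ y, y = -(t • e) := ⟨_, rfl⟩
  have hyo : h2 G u (u + y) = u + y := by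
    have : KK (h2 G) (u - t • e) (t • e) := H.t2.KK_smul (H.k12 (he _ (by linarith))) ht.le
    unfold KK at this
    rw [sub_add_cancel] at this
    rw [hy, ← sub_eq_add_neg]
    exact this
  set D := x + y with hD
  set m := σ - dist u c0 with hm
  have mp : 0 < m := by rw [hm]; linarith
  set δ0 := m / (4 * (‖D‖ + m + 1)) with hδ0
  have den : 0 < 4 * (‖D‖ + m + 1) := by positivity
  have δp : 0 < δ0 := by positivity
  have δ4 : δ0 ≤ 1/4 := by
    rw [hδ0, div_le_iff₀ den]; linarith [norm_nonneg D]
  have δD : δ0 * ‖D‖ ≤ m / 4 := by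
    rw [hδ0, div_mul_eq_mul_div, div_le_iff₀ den]; nlinarith [norm_nonneg D]
  have key : -(dt (P - u) (Q - u)) ≤ 0 := by
    apply small_le (M := δ0 * (-(dt (P - u) D + dt D (Q - u)) + dt D D))
    intro s' hs' hs1
    obtain ⟨δ, hδ⟩ : ∃ δ, δ = s' * δ0 := ⟨_, rfl⟩
    have dp : 0 < δ := by rw [hδ]; positivity
    have dle : δ ≤ δ0 := by rw [hδ]; nlinarith
    obtain ⟨v1, hv1⟩ : ∃ v1, v1 = u + δ • D := ⟨_, rfl⟩
    obtain ⟨w, hw⟩ : ∃ w, w = Q - v1 := ⟨_, rfl⟩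
    obtain ⟨p, hp⟩ : ∃ p, p = dt w n / dt x n := ⟨_, rfl⟩
    obtain ⟨r, hr⟩ : ∃ r, r = (p * dt x e - dt w e) / t := ⟨_, rfl⟩
    have hwp : w = p • x + r • y := by
      rw [hy]
      apply o.eq
      · simp only [dt_add_left, dt_smul_left, dt_neg_left, o.ee]
        rw [hr]; field_simp; ring
      · simp only [dt_add_left, dt_smul_left, dt_neg_left, o.en]
        rw [hp]; field_simp; ring
    have den2 : 0 < |p| + |r| + ‖w‖ + 1 := by positivity
    have minp : 0 < min δ (m/4) := lt_min dp (by positivity)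
    obtain ⟨s, hs⟩ : ∃ s, s = min δ (m/4) / (|p| + |r| + ‖w‖ + 1) := ⟨_, rfl⟩
    have sp : 0 < s := by rw [hs]; positivity
    have seq : s * (|p| + |r| + ‖w‖ + 1) = min δ (m/4) := by rw [hs]; exact div_mul_cancel₀ _ den2.ne'
    have m1 : min δ (m/4) ≤ δ := min_le_left _ _
    have m2 : min δ (m/4) ≤ m/4 := min_le_right _ _
    have sP : 0 ≤ s * |p| := by positivity
    have sR : 0 ≤ s * |r| := by positivity
    have sW : 0 ≤ s * ‖w‖ := by positivity
    have sp1 : |s * p| ≤ δ := by rw [abs_mul, abs_of_pos sp]; linarith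
    have sr1 : |s * r| ≤ δ := by rw [abs_mul, abs_of_pos sp]; linarith
    have sw1 : ‖s • w‖ ≤ m / 4 := by rw [norm_smul, Real.norm_of_nonneg sp.le]; linarith
    rw [abs_le] at sp1 sr1
    obtain ⟨v2, hv2⟩ : ∃ v2, v2 = v1 - s • w := ⟨_, rfl⟩
    have d1 : dist v1 c0 ≤ dist u c0 + m / 4 := by
      rw [hv1]
      have := dist_add_self (u := u) (x := δ • D) (c0 := c0)
      rw [norm_smul, Real.norm_of_nonneg dp.le] at this
      nlinarith [norm_nonneg D]
    have d2 : dist v2 c0 ≤ dist u c0 + m / 2 := by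
      rw [hv2, sub_eq_add_neg]
      have := dist_add_self (u := v1) (x := -(s • w)) (c0 := c0)
      rw [norm_neg] at this
      linarith
    have o1 : h2 G u v1 = v1 := by
      have := H.t2.optcone (H.t2.un u) hx hyo (α := δ) (β := δ) dp.le dp.le (by linarith)
      rwa [← smul_add, ← hD, ← hv1] at this
    have o2 : h2 G u v2 = v2 := by
      have := H.t2.optcone (H.t2.un u) hx hyo (α := δ - s * p) (β := δ - s * r) (by linarith) (by linarith) (by linarith)
      have ev : u + ((δ - s * p) • x + (δ - s * r) • y) = v2 := by
        rw [hv2, hv1, hwp, hD]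
        simp only [sub_smul, smul_add, smul_smul]
        abel
      rwa [ev] at this
    have kk : ∀ v, h2 G u v = v → KK (h3 G) v (u - v) := by
      intro v hv
      apply H.k23
      show h2 G _ _ = v
      rw [add_sub_cancel]; exact hv
    have f1 := H.k23 (H.trans hA (by linarith) hP (kk v1 o1))
    have f2 := H.k23 (H.trans hA (by linarith) hQ2 (kk v2 o2))
    have f3 : KK (h3 G) v2 w := by
      have e1 : Q - v2 = (1 + s) • w := by rw [hv2, add_smul, one_smul, hw]; abel
      rw [e1] at f2
      have := H.t3.KK_smul f2 (t := (1 + s)⁻¹) (by positivity)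
      rwa [smul_smul, inv_mul_cancel₀ (by positivity), one_smul] at this
    have f4 := hA v1 (P - v1) (s • w) (by linarith) f1 (by rw [← hv2]; exact H.t3.KK_smul f3 sp.le)
    rw [dt_smul_right] at f4
    have f5 : 0 ≤ dt (P - v1) w := nonneg_of_mul_nonneg_right f4 sp
    have e2 : P - v1 = (P - u) - δ • D := by rw [hv1]; abel
    have e3 : w = (Q - u) - δ • D := by rw [hw, hv1]; abel
    rw [e2, e3] at f5
    rw [← mul_assoc, ← hδ]
    have hDD := dt_nonneg D
    generalize P - u = a at *
    generalize Q - u = b at *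
    simp only [dt_sub_left, dt_sub_right (c := a), dt_sub_right (c := D), dt_smul_left, dt_smul_right] at f5
    have : δ * (δ * dt D D) ≤ δ * dt D D := by
      apply mul_le_mul_of_nonneg_left _ dp.le
      exact mul_le_of_le_one_left hDD (by linarith)
    linarith
  linarith

lemma FS.sitS (H : FS G) {e n c0 : E2} {ρ' : ℝ} (hρ' : 0 < ρ') (o : ON e n)
    (he : ∀ v, dist v c0 < ρ' → KK (h1 G) v e)
    (hn1 : ∀ v, dist v c0 < ρ' → ¬ KK (h3 G) v n) (hn2 : ∀ v, dist v c0 < ρ' → ¬ KK (h3 G) v (-n)) :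
    Bad G := by
  obtain ⟨η, h0, hη⟩ := H.eta (ρ := ρ' / 2) (by linarith) o he hn1 hn2
  obtain ⟨Z, hZ⟩ := H.dlem (ρ := ρ' / 2) (by linarith) h0 (he c0 (by simpa using hρ')) hη
  set σ := ρ' / 2 / 8 with hσ
  have σp : 0 < σ := by positivity
  have hA : Acute G c0 σ := H.acute σp hZ
  set ε := σ / 2 with hε
  have εp : 0 < ε := by positivity
  obtain ⟨P, hP⟩ : ∃ P, P = c0 + ε • n := ⟨_, rfl⟩
  obtain ⟨Q, hQ⟩ : ∃ Q, Q = c0 - ε • n := ⟨_, rfl⟩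
  obtain ⟨u, hu⟩ : ∃ u, u = h2 G P Q := ⟨_, rfl⟩
  have nεn : ‖ε • n‖ = ε := by rw [norm_smul, norm_one o.nn, Real.norm_of_nonneg εp.le, mul_one]
  have dP : dist P c0 = ε := by rw [hP, dist_eq_norm, add_sub_cancel_left, nεn]
  have dQ : dist Q c0 = ε := by rw [hQ, dist_eq_norm, sub_sub_cancel_left, norm_neg, nεn]
  have disc := H.t2.disc hu.symm
  have du : dist u c0 ≤ ε := by
    have e1 : P - u = ε • n - (u - c0) := by rw [hP]; abel
    have e2 : Q - u = -(ε • n) - (u - c0) := by rw [hQ]; abel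
    rw [e1, e2] at disc
    have := dist_dt u c0
    generalize u - c0 = x at disc this
    simp only [dt_sub_left, dt_neg_right, dt_sub_right, dt_smul_left, dt_smul_right, o.nn] at disc
    rw [dt_comm x n] at disc
    apply le_of_sq_le_sq _ εp.le
    nlinarith
  have hKP : KK (h2 G) u (P - u) := H.t2.KK_of1 hu.symm
  have hKQ : KK (h3 G) u (Q - u) := H.t2.KK_of2 hu.symm
  have neP : P - u ≠ 0 := by
    intro h
    have h : P = u := sub_eq_zero.mp h
    rw [← h] at hKQ
    have e1 : Q - P = (2 * ε) • (-n) := by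
      rw [hP, hQ, two_mul, add_smul, smul_neg]; abel
    rw [e1] at hKQ
    have := H.t3.KK_smul hKQ (t := (2 * ε)⁻¹) (by positivity)
    rw [smul_smul, inv_mul_cancel₀ (by positivity), one_smul] at this
    exact hn2 P (by rw [dP]; linarith) this
  have neQ : Q - u ≠ 0 := by
    intro h
    have h : Q = u := sub_eq_zero.mp h
    rw [← h] at hKP
    have e1 : P - Q = (2 * ε) • n := by
      rw [hP, hQ, two_mul, add_smul]; abel
    rw [e1] at hKP
    have := H.t2.KK_smul hKP (t := (2 * ε)⁻¹) (by positivity)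
    rw [smul_smul, inv_mul_cancel₀ (by positivity), one_smul] at this
    exact hn1 Q (by rw [dQ]; linarith) (H.k23 this)
  have acu := H.noobtuse o (σ := σ) (by linarith) he hA (by linarith) (hn1 u (by linarith)) hKP hKQ
  have right : dt (P - u) (Q - u) = 0 := le_antisymm disc acu
  have aQ : KK (h2 G) Q (P - u) := by
    rw [H.t2.KK_iff]
    intro X'
    have := H.t2.vi1 P X' Q
    rw [← hu] at this
    have e1 : h2 G X' Q - Q = (h2 G X' Q - u) - (Q - u) := by abel
    rw [e1, dt_sub_right, right]
    linarith
  have bP : KK (h3 G) P (Q - u) := by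
    rw [H.t3.KK_iff]
    intro X'
    have := H.t2.vi2 P Q X'
    rw [← hu] at this
    have e1 : h3 G X' P - P = (h2 G P X' - u) - (P - u) := by abel
    rw [e1, dt_sub_right, dt_comm (Q - u) (P - u), right]
    linarith
  obtain ⟨r1, hr1, k1⟩ := H.t2.lemA neP aQ one_pos
  obtain ⟨r2, hr2, k2⟩ := H.t3.lemA neQ bP one_pos
  obtain ⟨c, hc⟩ : ∃ c, c = P + Q - u := ⟨_, rfl⟩
  have c1 : Q + (1:ℝ) • (P - u) = c := by rw [hc, one_smul]; abel
  have c2 : P + (1:ℝ) • (Q - u) = c := by rw [hc, one_smul]; abel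
  rw [c1] at k1
  rw [c2] at k2
  have dc : dist c c0 ≤ ε := by
    have : c - c0 = c0 - u := by rw [hc, hP, hQ]; abel
    rw [dist_eq_norm, this, ← dist_eq_norm, dist_comm]
    exact du
  set ρ := min (min r1 r2) ε with hρ
  have ρp : 0 < ρ := by positivity
  have near : ∀ v, dist v c < ρ → KK (h3 G) v (P - u) ∧ KK (h3 G) v (Q - u) ∧ dist v c0 < σ := by
    intro v hv
    rw [hρ, lt_min_iff, lt_min_iff] at hv
    refine ⟨H.k23 (k1 v hv.1.1), k2 v hv.1.2, ?_⟩
    have := dist_triangle v c c0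
    linarith [hv.2]
  have nA : 0 < ‖P - u‖ := norm_pos_iff.mpr neP
  have nB : 0 < ‖Q - u‖ := norm_pos_iff.mpr neQ
  have oo : ON (‖P - u‖⁻¹ • (P - u)) (‖Q - u‖⁻¹ • (Q - u)) :=
    ⟨unit_of neP, unit_of neQ, by rw [dt_smul_left, dt_smul_right, right, mul_zero, mul_zero]⟩
  have gen : ∀ b : E2, (∀ v, dist v c < ρ → KK (h3 G) v b) → ∀ v k, dist v c < ρ → KK (h3 G) v k → 0 ≤ dt k b := by
    intro b hb v k hv hk
    obtain ⟨t, ht, ht2⟩ := ball_step (e := b) hv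
    have := hA v k (t • b) (near v hv).2.2 hk (H.t3.KK_smul (hb _ ht2) ht.le)
    rw [dt_smul_right] at this
    exact nonneg_of_mul_nonneg_right this ht
  apply H.final2 ρp oo (c0 := c)
  intro v k hv hk
  rw [dt_smul_right, dt_smul_right]
  exact ⟨mul_nonneg (by positivity) (gen _ (fun v hv => (near v hv).1) v k hv hk),
    mul_nonneg (by positivity) (gen _ (fun v hv => (near v hv).2.1) v k hv hk)⟩

lemma ball_subset_open {S : Set E2} (hS : IsOpen S) {x c0 : E2} {ρ : ℝ} (hx : x ∈ S) (hxc : dist x c0 < ρ) :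
    ∃ r > 0, ∀ v, dist v x < r → v ∈ S ∧ dist v c0 < ρ := by
  have : IsOpen (S ∩ Metric.ball c0 ρ) := hS.inter Metric.isOpen_ball
  obtain ⟨r, hr, h⟩ := Metric.isOpen_iff.mp this x ⟨hx, hxc⟩
  exact ⟨r, hr, fun v hv => h hv⟩

lemma FS.open3 (H : FS G) (n : E2) : IsOpen {v | ¬ KK (h3 G) v n} := by
  have := H.t3.KK_closed.preimage (f := fun v : E2 => (v, n)) (by fun_prop)
  exact this.isOpen_compl

lemma FS.main (H : FS G) {A B : E2} (h : G A A A A B ≠ A) : Bad G := by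
  obtain ⟨w, hw⟩ : ∃ w, w = h1 G A B := ⟨_, rfl⟩
  have ne : A - w ≠ 0 := by
    intro h'
    apply h
    rw [sub_eq_zero.mp h']
    exact (sub_eq_zero.mp h') ▸ hw.symm
  have hK : KK (h1 G) w (A - w) := H.t1.KK_of1 hw.symm
  obtain ⟨ρ, hρ, hb⟩ := H.t1.lemA ne hK one_pos
  generalize w + (1:ℝ) • (A - w) = c0 at hb
  obtain ⟨e, he⟩ : ∃ e, e = ‖A - w‖⁻¹ • (A - w) := ⟨_, rfl⟩
  have o : ON e (JJ e) := ON.JJ (by rw [he]; exact unit_of ne)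
  have hb : ∀ v, dist v c0 < ρ → KK (h1 G) v e := by
    intro v hv
    rw [he]
    exact H.t1.KK_smul (hb v hv) (by positivity)
  generalize JJ e = n at *
  by_cases q1 : ∀ v, dist v c0 < ρ → KK (h3 G) v n
  · exact H.final1 hρ o hb q1
  push Not at q1
  obtain ⟨x, hx1, hx2⟩ := q1
  obtain ⟨r, hr, hx⟩ := ball_subset_open (H.open3 n) hx2 hx1
  by_cases q2 : ∀ v, dist v x < r → KK (h3 G) v (-n)
  · exact H.final1 hr o.neg (fun v hv => hb v (hx v hv).2) q2
  push Not at q2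
  obtain ⟨x', hx1', hx2'⟩ := q2
  obtain ⟨r', hr', hx'⟩ := ball_subset_open (H.open3 (-n)) hx2' hx1'
  exact H.sitS hr' o (fun v hv => hb v (hx v (hx' v hv).2).2) (fun v hv => (hx v (hx' v hv).2).1)
    (fun v hv => (hx' v hv).1)

end

lemma opt_le {x : Fin 5 → E2} {c : E2} {r : ℝ} (h : ∀ i, dist c (x i) ≤ r) :
    (⨅ y : E2, ⨆ i, dist y (x i)) ≤ r := by
  refine (ciInf_le ⟨0, ?_⟩ c).trans (ciSup_le h)
  rintro _ ⟨y, rfl⟩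
  exact Real.iSup_nonneg fun i => dist_nonneg

lemma le_cost (x : Fin 5 → E2) (y : E2) (i : Fin 5) : dist y (x i) ≤ ⨆ i, dist y (x i) :=
  le_ciSup (f := fun i => dist y (x i)) (Set.finite_range _).bddAbove i

lemma opt_pos {x : Fin 5 → E2} {i j : Fin 5} (h : x i ≠ x j) : 0 < (⨅ y : E2, ⨆ i, dist y (x i)) := by
  have hd : 0 < dist (x i) (x j) := dist_pos.mpr h
  refine lt_of_lt_of_le (half_pos hd) (le_ciInf fun y => ?_)
  have h1 := le_cost x y i
  have h2 := le_cost x y j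
  have := dist_triangle (x i) y (x j)
  rw [dist_comm (x i) y] at this
  linarith

theorem stmt11
    (f : (Fin 5 → EuclideanSpace ℝ (Fin 2)) → (Fin 5 → EuclideanSpace ℝ (Fin 2)) →
      EuclideanSpace ℝ (Fin 2))
    (htruth : ∀ (p x : Fin 5 → EuclideanSpace ℝ (Fin 2)) (i : Fin 5)
        (x' : EuclideanSpace ℝ (Fin 2)),
      dist (f x p) (x i) ≤ dist (f (Function.update x i x') p) (x i))
    (hanon : ∀ (p x : Fin 5 → EuclideanSpace ℝ (Fin 2)) (σ : Equiv.Perm (Fin 5)),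
      f (x ∘ σ) p = f x p)
    (hunan : ∀ (p : Fin 5 → EuclideanSpace ℝ (Fin 2)) (z : EuclideanSpace ℝ (Fin 2)),
      f (fun _ => z) p = z) :
    (∃ x : Fin 5 → EuclideanSpace ℝ (Fin 2),
      0 < (⨅ y : EuclideanSpace ℝ (Fin 2), ⨆ i, dist y (x i)) ∧
      2 * (⨅ y : EuclideanSpace ℝ (Fin 2), ⨆ i, dist y (x i))
        ≤ ⨆ i, dist (f x x) (x i)) ∨
    (∃ x p : Fin 5 → EuclideanSpace ℝ (Fin 2),
      0 < (⨅ y : EuclideanSpace ℝ (Fin 2), ⨆ i, dist y (x i)) ∧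
      (1 + Real.sqrt 2) * (⨅ y : EuclideanSpace ℝ (Fin 2), ⨆ i, dist y (x i))
        ≤ ⨆ i, dist (f x p) (x i)) := by
  obtain ⟨A, B, hAB⟩ : ∃ A B : E2, A ≠ B := exists_pair_ne E2
  set p : Fin 5 → E2 := ![A, A, A, A, B] with hp
  have HF : FS (fun a b c d e => f ![a, b, c, d, e] p) := by
    refine ⟨?_, ?_, ?_, ?_, ?_, ?_⟩
    · intro a b c d e e'
      have := htruth p ![a, b, c, d, e] 4 e'
      have hup : Function.update ![a, b, c, d, e] 4 e' = ![a, b, c, d, e'] := by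
        ext1 i; fin_cases i <;> simp [Function.update]
      rw [hup] at this
      exact dist_le_dt.mp this
    · intro a
      have : (![a, a, a, a, a] : Fin 5 → E2) = fun _ => a := by
        ext1 i; fin_cases i <;> rfl
      show f _ p = a
      rw [this, hunan]
    · intro a b c d e
      show f _ p = f _ p
      rw [← hanon p ![a, b, c, d, e] (Equiv.swap 0 1)]
      congr 1
      ext1 i; fin_cases i <;> rfl
    · intro a b c d e
      show f _ p = f _ p
      rw [← hanon p ![a, b, c, d, e] (Equiv.swap 1 2)]
      congr 1
      ext1 i; fin_cases i <;> rfl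
    · intro a b c d e
      show f _ p = f _ p
      rw [← hanon p ![a, b, c, d, e] (Equiv.swap 2 3)]
      congr 1
      ext1 i; fin_cases i <;> rfl
    · intro a b c d e
      show f _ p = f _ p
      rw [← hanon p ![a, b, c, d, e] (Equiv.swap 3 4)]
      congr 1
      ext1 i; fin_cases i <;> rfl
  by_cases hA : f p p = A
  · left
    refine ⟨p, opt_pos (i := 0) (j := 4) (by simpa [hp] using hAB), ?_⟩
    have h1 := le_cost p (f p p) 4
    rw [hA] at h1 ⊢
    have h2 : (⨅ y : E2, ⨆ i, dist y (p i)) ≤ dist A B / 2 := by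
      apply opt_le (c := midpoint ℝ A B)
      have e1 : dist (midpoint ℝ A B) A = dist A B / 2 := by
        rw [dist_midpoint_left]; simp; ring
      have e2 : dist (midpoint ℝ A B) B = dist A B / 2 := by
        rw [dist_midpoint_right]; simp; ring
      intro i
      fin_cases i
      · exact e1.le
      · exact e1.le
      · exact e1.le
      · exact e1.le
      · exact e2.le
    have h3 : dist A (p 4) = dist A B := rfl
    linarith
  · right
    obtain ⟨a, b, c, d, e, c0, r, hr, g1, g2, g3, g4, g5, hne, hbig⟩ := HF.main hA
    refine ⟨![a, b, c, d, e], p, opt_pos (i := 0) (j := 3) hne, ?_⟩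
    have h1 := le_cost ![a, b, c, d, e] (f ![a, b, c, d, e] p) 4
    have h2 : (⨅ y : E2, ⨆ i, dist y ((![a, b, c, d, e] : Fin 5 → E2) i)) ≤ r := by
      apply opt_le (c := c0)
      intro i
      fin_cases i
      · exact g1
      · exact g2
      · exact g3
      · exact g4
      · exact g5
    have h3 := mul_le_mul_of_nonneg_left h2 (by positivity : 0 ≤ 1 + Real.sqrt 2)
    exact h3.trans (hbig.trans h1)
end
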